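/- Let P = {p_0, …, p_{n+2}} ⊆ ℝ² be a configuration of n+3 distinct points whose convex hull is two-dimensional, such that every point of P is either a vertex (extreme point) of conv(P) or lies in the relative interior of an edge of conv(P), and each edge of conv(P) contains at most one point of P in its relative interior. Let Q = {q_0, …, q_{n+2}} ⊆ ℝ² be a configuration of n+3 distinct points in convex position (every point of Q is an extreme point of conv(Q)). Then there is a bijection between the set of triangulations of P and the set of triangulations of Q. -/

import Mathlib

open MeasureTheory

/-- Area (2-dimensional Lebesgue measure) of the convex hull of the points
indexed by `σ`. -/
noncomputable def triArea {m : ℕ} (v : Fin m → ℝ × ℝ) (σ : Finset (Fin m)) : ℝ :=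
  (volume (convexHull ℝ (v '' ↑σ))).toReal

/-- `T` is a triangulation of the planar point configuration `v`:
a finite set of affinely independent triples whose convex hulls cover the
convex hull of the configuration, any two of which meet in a common
(extreme) face of each. -/
def IsTriangulation {m : ℕ} (v : Fin m → ℝ × ℝ) (T : Finset (Finset (Fin m))) : Prop :=
  (∀ σ ∈ T, σ.card = 3 ∧ AffineIndependent ℝ (fun i : {x // x ∈ σ} => v i.1)) ∧
  (⋃ σ ∈ T, convexHull ℝ (v '' ↑σ)) = convexHull ℝ (Set.range v) ∧
  ∀ σ ∈ T, ∀ τ ∈ T,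
    IsExtreme ℝ (convexHull ℝ (v '' ↑σ)) (convexHull ℝ (v '' ↑σ) ∩ convexHull ℝ (v '' ↑τ)) ∧
    IsExtreme ℝ (convexHull ℝ (v '' ↑τ)) (convexHull ℝ (v '' ↑σ) ∩ convexHull ℝ (v '' ↑τ))

/-- The GKZ vector of a triangulation `T` with respect to the vectors `f i`:
`GKZ(T) = ∑ i (∑ {σ ∈ T : i ∈ σ} vol σ) • f i`. -/
noncomputable def GKZ {m : ℕ} {E : Type*} [AddCommGroup E] [Module ℝ E]
    (v : Fin m → ℝ × ℝ) (f : Fin m → E) (T : Finset (Finset (Fin m))) : E :=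
  ∑ i, (∑ σ ∈ T.filter (fun σ => i ∈ σ), triArea v σ) • f i



/-! ### Orientation determinant and hulls -/

/-- Orientation determinant of three planar points. -/
def chi (a b c : ℝ × ℝ) : ℝ := (b.1 - a.1) * (c.2 - a.2) - (b.2 - a.2) * (c.1 - a.1)

lemma chi_rot (a b c : ℝ × ℝ) : chi b c a = chi a b c := by unfold chi; ring
lemma chi_swap (a b c : ℝ × ℝ) : chi a c b = - chi a b c := by unfold chi; ring
lemma chi_swap' (a b c : ℝ × ℝ) : chi b a c = - chi a b c := by unfold chi; ring
lemma chi_left (a b : ℝ × ℝ) : chi a a b = 0 := by unfold chi; ring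
lemma chi_right (a b : ℝ × ℝ) : chi a b b = 0 := by unfold chi; ring

lemma chi_sum (a b c d : ℝ × ℝ) :
    chi b c d + chi a b d = chi a c d + chi a b c := by unfold chi; ring

lemma chi_rel (a b c d : ℝ × ℝ) :
    chi b c d • a + chi a b d • c = chi a c d • b + chi a b c • d := by
  unfold chi
  ext <;> simp <;> ring

lemma chi_combo (a b x y : ℝ × ℝ) (s t : ℝ) (h : s + t = 1) :
    chi a (s • x + t • y) b = s * chi a x b + t * chi a y b := by
  obtain rfl : t = 1 - s := by linarith
  unfold chi
  simp
  ring

lemma chi_sum_weights {ι : Type*} (a b : ℝ × ℝ) (σ : Finset ι) (w : ι → ℝ) (v : ι → ℝ × ℝ)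
    (h : ∑ i ∈ σ, w i = 1) :
    chi a (∑ i ∈ σ, w i • v i) b = ∑ i ∈ σ, w i * chi a (v i) b := by
  have e : ∀ x : ℝ × ℝ, chi a x b = (b.2 - a.2) * x.1 - (b.1 - a.1) * x.2
      + (a.2 * (b.1 - a.1) - a.1 * (b.2 - a.2)) := by
    intro x; unfold chi; ring
  rw [e, Prod.fst_sum, Prod.snd_sum]
  simp only [e, Prod.smul_fst, Prod.smul_snd, smul_eq_mul, Finset.mul_sum]
  generalize a.2 * (b.1 - a.1) - a.1 * (b.2 - a.2) = C
  have : C = ∑ i ∈ σ, w i * C := by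
    rw [← Finset.sum_mul, h, one_mul]
  conv_lhs => rw [this]
  rw [← Finset.sum_sub_distrib, ← Finset.sum_add_distrib]
  refine Finset.sum_congr rfl fun i _ => ?_
  ring

lemma chi_continuous (a b : ℝ × ℝ) : Continuous fun x => chi a x b := by
  unfold chi; fun_prop

/-- A nonnegative `chi a · b` on `s` is positive on the interior. -/
lemma chi_pos_of_interior {a b : ℝ × ℝ} (hab : a ≠ b) {s : Set (ℝ × ℝ)}
    (hs : ∀ x ∈ s, 0 ≤ chi a x b) {x : ℝ × ℝ} (hx : x ∈ interior s) : 0 < chi a x b := by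
  by_contra hneg
  have h0 : chi a x b = 0 := le_antisymm (not_lt.1 hneg) (hs x (interior_subset hx))
  set d : ℝ × ℝ := (-(b.2 - a.2), b.1 - a.1) with hd
  have hc : Continuous fun t : ℝ => x + t • d := by fun_prop
  have hmem : ∀ᶠ t : ℝ in nhds 0, x + t • d ∈ interior s := by
    apply hc.continuousAt.eventually_mem
    simpa using isOpen_interior.mem_nhds hx
  obtain ⟨ε, hε, hball⟩ := Metric.eventually_nhds_iff.1 hmem
  have h1 := hs _ (interior_subset (hball (y := ε / 2) (by
    rw [Real.dist_eq, sub_zero, abs_of_pos (by linarith)]; linarith)))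
  have h2 : chi a (x + (ε / 2) • d) b
      = chi a x b - (ε / 2) * ((b.1 - a.1) ^ 2 + (b.2 - a.2) ^ 2) := by
    unfold chi; simp [hd]; ring
  have h3 : 0 < (b.1 - a.1) ^ 2 + (b.2 - a.2) ^ 2 := by
    by_contra h
    apply hab
    have e1 : (b.1 - a.1) = 0 := by nlinarith [sq_nonneg (b.1 - a.1), sq_nonneg (b.2 - a.2)]
    have e2 : (b.2 - a.2) = 0 := by nlinarith [sq_nonneg (b.1 - a.1), sq_nonneg (b.2 - a.2)]
    ext <;> linarith
  rw [h2, h0] at h1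
  nlinarith

lemma chi_dense {a b : ℝ × ℝ} (hab : a ≠ b) : Dense {x : ℝ × ℝ | chi a x b ≠ 0} := by
  have : {x : ℝ × ℝ | chi a x b ≠ 0} = {x : ℝ × ℝ | chi a x b = 0}ᶜ := by ext; simp
  rw [this, ← interior_eq_empty_iff_dense_compl, Set.eq_empty_iff_forall_notMem]
  intro x hx
  have := chi_pos_of_interior hab (s := {x : ℝ × ℝ | chi a x b = 0}) (fun x hx => le_of_eq hx.symm) hx
  have h2 := interior_subset hx
  simp at h2
  linarith

section
variable {m : ℕ}

/-- The convex hull of the points indexed by `σ`. -/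
def Hl (v : Fin m → ℝ × ℝ) (σ : Finset (Fin m)) : Set (ℝ × ℝ) := convexHull ℝ (v '' ↑σ)

/-- Affine independence of the points indexed by `σ`. -/
def NI (v : Fin m → ℝ × ℝ) (σ : Finset (Fin m)) : Prop :=
  AffineIndependent ℝ (fun i : {x // x ∈ σ} => v i.1)

/-- The hulls of `σ` and `τ` meet in a common face. -/
def Compat (v : Fin m → ℝ × ℝ) (σ τ : Finset (Fin m)) : Prop :=
  IsExtreme ℝ (Hl v σ) (Hl v σ ∩ Hl v τ) ∧ IsExtreme ℝ (Hl v τ) (Hl v σ ∩ Hl v τ)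

lemma Compat.symm {v : Fin m → ℝ × ℝ} {σ τ : Finset (Fin m)} (h : Compat v σ τ) :
    Compat v τ σ := by
  unfold Compat at *
  rw [Set.inter_comm]
  exact ⟨h.2, h.1⟩

lemma Compat.self (v : Fin m → ℝ × ℝ) (σ : Finset (Fin m)) : Compat v σ σ := by
  unfold Compat
  rw [Set.inter_self]
  exact ⟨IsExtreme.refl _ _, IsExtreme.refl _ _⟩

lemma mem_Hl {v : Fin m → ℝ × ℝ} {σ : Finset (Fin m)} {x : ℝ × ℝ} :
    x ∈ Hl v σ ↔ ∃ w : Fin m → ℝ, (∀ i ∈ σ, 0 ≤ w i) ∧ ∑ i ∈ σ, w i = 1 ∧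
      ∑ i ∈ σ, w i • v i = x := by
  constructor
  · intro hx
    have hc : Convex ℝ {x : ℝ × ℝ | ∃ w : Fin m → ℝ, (∀ i ∈ σ, 0 ≤ w i) ∧ ∑ i ∈ σ, w i = 1 ∧
      ∑ i ∈ σ, w i • v i = x} := by
      rintro x ⟨w, hw, hw1, rfl⟩ y ⟨u, hu, hu1, rfl⟩ s t hs ht hst
      refine ⟨fun i => s * w i + t * u i, fun i hi => ?_, ?_, ?_⟩
      · have := hw i hi; have := hu i hi; positivity
      · rw [Finset.sum_add_distrib, ← Finset.mul_sum, ← Finset.mul_sum, hw1, hu1]; linarith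
      · simp only [add_smul, mul_smul, Finset.sum_add_distrib, Finset.smul_sum]
    refine convexHull_min ?_ hc hx
    rintro _ ⟨j, hj, rfl⟩
    have hj' : j ∈ σ := hj
    refine ⟨fun i => if i = j then 1 else 0, fun i _ => by positivity, ?_, ?_⟩
    · simp [hj']
    · simp [hj']
  · rintro ⟨w, hw, hw1, rfl⟩
    exact (convex_convexHull ℝ _).sum_mem hw hw1
      (fun i hi => subset_convexHull ℝ _ ⟨i, hi, rfl⟩)

lemma Hl_convex (v : Fin m → ℝ × ℝ) (σ : Finset (Fin m)) : Convex ℝ (Hl v σ) :=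
  convex_convexHull ℝ _

lemma Hl_mono {v : Fin m → ℝ × ℝ} {σ τ : Finset (Fin m)} (h : σ ⊆ τ) : Hl v σ ⊆ Hl v τ :=
  convexHull_mono (Set.image_mono (by exact_mod_cast h))

lemma vert_mem_Hl {v : Fin m → ℝ × ℝ} {σ : Finset (Fin m)} {i : Fin m} (h : i ∈ σ) :
    v i ∈ Hl v σ := subset_convexHull ℝ _ ⟨i, h, rfl⟩

lemma Hl_closed (v : Fin m → ℝ × ℝ) (σ : Finset (Fin m)) : IsClosed (Hl v σ) :=
  (Set.Finite.isCompact_convexHull (𝕜 := ℝ) (σ.finite_toSet.image v)).isClosed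

lemma Hl_nonneg {v : Fin m → ℝ × ℝ} {σ : Finset (Fin m)} {a b : ℝ × ℝ}
    (h : ∀ i ∈ σ, 0 ≤ chi a (v i) b) {x : ℝ × ℝ} (hx : x ∈ Hl v σ) : 0 ≤ chi a x b := by
  obtain ⟨w, hw, hw1, rfl⟩ := mem_Hl.1 hx
  rw [chi_sum_weights _ _ _ _ _ hw1]
  exact Finset.sum_nonneg fun i hi => mul_nonneg (hw i hi) (h i hi)

lemma Hl_nonpos {v : Fin m → ℝ × ℝ} {σ : Finset (Fin m)} {a b : ℝ × ℝ}
    (h : ∀ i ∈ σ, chi a (v i) b ≤ 0) {x : ℝ × ℝ} (hx : x ∈ Hl v σ) : chi a x b ≤ 0 := by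
  obtain ⟨w, hw, hw1, rfl⟩ := mem_Hl.1 hx
  rw [chi_sum_weights _ _ _ _ _ hw1]
  exact Finset.sum_nonpos fun i hi => mul_nonpos_of_nonneg_of_nonpos (hw i hi) (h i hi)

/-- Points of the hull on a supporting line are in the hull of the vertices on that line. -/
lemma Hl_zero {v : Fin m → ℝ × ℝ} {σ ρ : Finset (Fin m)} {a b : ℝ × ℝ}
    (h : ∀ i ∈ σ, 0 ≤ chi a (v i) b) (hρ : ∀ i ∈ σ, chi a (v i) b = 0 → i ∈ ρ)
    {x : ℝ × ℝ} (hx : x ∈ Hl v σ) (hx0 : chi a x b = 0) : x ∈ Hl v (σ ∩ ρ) := by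
  obtain ⟨w, hw, hw1, rfl⟩ := mem_Hl.1 hx
  rw [chi_sum_weights _ _ _ _ _ hw1] at hx0
  have hz := (Finset.sum_eq_zero_iff_of_nonneg
    (fun i hi => mul_nonneg (hw i hi) (h i hi))).1 hx0
  have hw0 : ∀ i ∈ σ, i ∉ σ ∩ ρ → w i = 0 := by
    intro i hi hi'
    rcases mul_eq_zero.1 (hz i hi) with h1 | h1
    · exact h1
    · exact absurd (Finset.mem_inter.2 ⟨hi, hρ i hi h1⟩) hi'
  refine mem_Hl.2 ⟨w, fun i hi => hw i (Finset.mem_inter.1 hi).1, ?_, ?_⟩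
  · rw [← hw1]
    exact Finset.sum_subset Finset.inter_subset_left hw0
  · exact Finset.sum_subset Finset.inter_subset_left
      (fun i hi hi' => by rw [hw0 i hi hi', zero_smul])

lemma Hl_zero' {v : Fin m → ℝ × ℝ} {σ ρ : Finset (Fin m)} {a b : ℝ × ℝ}
    (h : ∀ i ∈ σ, chi a (v i) b ≤ 0) (hρ : ∀ i ∈ σ, chi a (v i) b = 0 → i ∈ ρ)
    {x : ℝ × ℝ} (hx : x ∈ Hl v σ) (hx0 : chi a x b = 0) : x ∈ Hl v (σ ∩ ρ) := by
  have e : ∀ y, chi b y a = - chi a y b := fun y => by unfold chi; ring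
  refine Hl_zero (a := b) (b := a) (fun i hi => ?_) (fun i hi h0 => hρ i hi ?_) hx ?_
  · rw [e]; linarith [h i hi]
  · rw [e] at h0; linarith
  · rw [e]; linarith

lemma NI_iff {v : Fin m → ℝ × ℝ} {σ : Finset (Fin m)} :
    NI v σ ↔ ∀ w : Fin m → ℝ, ∑ i ∈ σ, w i = 0 → ∑ i ∈ σ, w i • v i = 0 → ∀ i ∈ σ, w i = 0 := by
  unfold NI
  rw [affineIndependent_iff_of_fintype]
  constructor
  · intro h w h0 h1 i hi
    have := h (fun i => w i.1) (by rw [← h0]; exact Finset.sum_coe_sort σ w) (by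
      rw [Finset.weightedVSub_eq_linear_combination]
      · rw [← h1]; exact Finset.sum_coe_sort σ (fun i => w i • v i)
      · rw [← h0]; exact Finset.sum_coe_sort σ w)
    exact this ⟨i, hi⟩
  · intro h w h0 h1 i
    rw [Finset.weightedVSub_eq_linear_combination (hw := h0)] at h1
    have key := h (fun i => if hi : i ∈ σ then w ⟨i, hi⟩ else 0) (by
      rw [← Finset.sum_coe_sort, ← h0]; simp) (by
      rw [← Finset.sum_coe_sort, ← h1]; simp) i.1 i.2
    simpa using key

/-- Faces of a simplex are extreme. -/
lemma NI.extreme {v : Fin m → ℝ × ℝ} {σ ρ : Finset (Fin m)} (hσ : NI v σ) (hρ : ρ ⊆ σ) :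
    IsExtreme ℝ (Hl v σ) (Hl v ρ) := by
  refine ⟨Hl_mono hρ, ?_⟩
  rintro x hx y hy z hz ⟨s, t, hs, ht, hst, hxy⟩
  obtain ⟨w, hw, hw1, rfl⟩ := mem_Hl.1 hx
  obtain ⟨u, hu, hu1, rfl⟩ := mem_Hl.1 hy
  obtain ⟨r, hr, hr1, rfl⟩ := mem_Hl.1 hz
  have e1 : ∑ i ∈ σ, (if i ∈ ρ then r i else 0) = 1 := by
    rw [Finset.sum_ite_mem, Finset.inter_eq_right.2 hρ, hr1]
  have e2 : ∑ i ∈ σ, (if i ∈ ρ then r i else 0) • v i = ∑ i ∈ ρ, r i • v i := by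
    simp only [ite_smul, zero_smul]
    rw [Finset.sum_ite_mem, Finset.inter_eq_right.2 hρ]
  have key := NI_iff.1 hσ (fun i => s * w i + t * u i - (if i ∈ ρ then r i else 0)) (by
    rw [Finset.sum_sub_distrib, Finset.sum_add_distrib, ← Finset.mul_sum, ← Finset.mul_sum,
      hw1, hu1, e1]; linarith) (by
    simp only [sub_smul, add_smul, Finset.sum_sub_distrib, Finset.sum_add_distrib, mul_smul,
      ← Finset.smul_sum]
    rw [e2, hxy, sub_self])
  have hw0 : ∀ i ∈ σ, i ∉ ρ → w i = 0 := by
    intro i hi hi'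
    have h1 := key i hi
    simp only [hi', if_false] at h1
    have := hw i hi
    have := hu i hi
    have h2 : 0 ≤ s * w i := by positivity
    have h3 : 0 ≤ t * u i := by positivity
    have h4 : s * w i = 0 := by linarith
    rcases mul_eq_zero.1 h4 with h | h
    · linarith
    · exact h
  refine mem_Hl.2 ⟨w, fun i hi => hw i (hρ hi), ?_, ?_⟩
  · rw [← hw1]; exact Finset.sum_subset hρ hw0
  · exact Finset.sum_subset hρ (fun i hi hi' => by rw [hw0 i hi hi', zero_smul])

lemma compat_of_subset {v : Fin m → ℝ × ℝ} {σ τ : Finset (Fin m)} (hσ : NI v σ) (hτ : NI v τ)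
    (h : Hl v σ ∩ Hl v τ ⊆ Hl v (σ ∩ τ)) : Compat v σ τ := by
  have e : Hl v σ ∩ Hl v τ = Hl v (σ ∩ τ) := h.antisymm
    (Set.subset_inter (Hl_mono Finset.inter_subset_left) (Hl_mono Finset.inter_subset_right))
  unfold Compat
  rw [e]
  exact ⟨hσ.extreme Finset.inter_subset_left, hτ.extreme Finset.inter_subset_right⟩

lemma NI_triple {v : Fin m → ℝ × ℝ} {a b c : Fin m} (hab : a ≠ b) (hac : a ≠ c) (hbc : b ≠ c) :
    NI v {a, b, c} ↔ chi (v a) (v b) (v c) ≠ 0 := by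
  rw [NI_iff]
  have hs : ∀ {M : Type} [AddCommMonoid M] (f : Fin m → M), ∑ i ∈ ({a, b, c} : Finset (Fin m)), f i = f a + (f b + f c) := by
    intro M _ f
    rw [Finset.sum_insert (by simp [hab, hac]), Finset.sum_pair hbc]
  simp only [hs]
  constructor
  · intro h h0
    -- weights from the minors
    have key : ∀ (α β γ : ℝ), α + (β + γ) = 0 → α • v a + (β • v b + γ • v c) = 0 →
        α = 0 ∧ β = 0 ∧ γ = 0 := by
      intro α β γ h1 h2
      have := h (fun i => if i = a then α else if i = b then β else γ) (by
        simpa [hab.symm, hac.symm, hbc.symm] using h1) (by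
        simpa [hab.symm, hac.symm, hbc.symm] using h2)
      have ha := this a (by simp)
      have hb := this b (by simp)
      have hc := this c (by simp)
      simp [hab.symm, hac.symm, hbc.symm] at ha hb hc
      exact ⟨ha, hb, hc⟩
    unfold chi at h0
    have k1 := key ((v b).1 - (v c).1) ((v c).1 - (v a).1) ((v a).1 - (v b).1) (by ring) (by
      ext <;> simp <;> linarith)
    have k2 := key ((v b).2 - (v c).2) ((v c).2 - (v a).2) ((v a).2 - (v b).2) (by ring) (by
      ext <;> simp <;> linarith)
    have e1 : v a = v b := by ext <;> linarith [k1.2.2, k2.2.2]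
    have e2 : v a = v c := by ext <;> linarith [k1.2.1, k2.2.1]
    have := key 1 (-1) 0 (by ring) (by rw [e1]; simp)
    linarith [this.1]
  · intro h w h1 h2 i hi
    have h3 := congrArg Prod.fst h2
    have h4 := congrArg Prod.snd h2
    simp at h3 h4
    have ea : w a = - (w b + w c) := by linarith
    rw [ea] at h3 h4
    have hb : w b * chi (v a) (v b) (v c) = 0 := by unfold chi; linear_combination h3 * ((v c).2 - (v a).2) - h4 * ((v c).1 - (v a).1)
    have hc : w c * chi (v a) (v b) (v c) = 0 := by unfold chi; linear_combination - h3 * ((v b).2 - (v a).2) + h4 * ((v b).1 - (v a).1)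
    have hb' := (mul_eq_zero.1 hb).resolve_right h
    have hc' := (mul_eq_zero.1 hc).resolve_right h
    simp only [Finset.mem_insert, Finset.mem_singleton] at hi
    rcases hi with rfl | rfl | rfl
    · rw [ea, hb', hc']; simp
    · exact hb'
    · exact hc'

lemma NI.interior_nonempty {v : Fin m → ℝ × ℝ} {σ : Finset (Fin m)} (h : NI v σ)
    (hc : σ.card = 3) : (interior (Hl v σ)).Nonempty := by
  unfold Hl
  rw [interior_convexHull_nonempty_iff_affineSpan_eq_top]
  have := (AffineIndependent.affineSpan_eq_top_iff_card_eq_finrank_add_one h).2 (by simp [hc])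
  have e : v '' ↑σ = Set.range (fun i : {x // x ∈ σ} => v i.1) := by ext x; simp
  rw [e]
  exact this

end


section
variable {m : ℕ}

/-- Weakly convex cyclically sorted configurations, in the form used below. -/
structure Good (v : Fin m → ℝ × ℝ) : Prop where
  inj : Function.Injective v
  g1 : ∀ a b c, a < b → b < c → 0 ≤ chi (v a) (v b) (v c)
  g2 : ∀ a b c d, a < b → b < c → c < d → 0 < chi (v a) (v c) (v d)
  g3 : ∀ a b c d, a < b → b < c → c < d → ((∃ e, e < a) ∨ ∃ e, d < e) →
    0 < chi (v a) (v b) (v d)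
  g4 : ∀ a b c d e, v a ∈ openSegment ℝ (v b) (v c) → b ≠ c →
    v b ∈ openSegment ℝ (v d) (v e) → d ≠ e → False

lemma exists_sorted_triple {σ : Finset (Fin m)} (h : σ.card = 3) :
    ∃ a b c, a < b ∧ b < c ∧ σ = {a, b, c} := by
  obtain ⟨x, y, z, hxy, hxz, hyz, rfl⟩ := Finset.card_eq_three.1 h
  rcases lt_or_gt_of_ne hxy with h1 | h1 <;> rcases lt_or_gt_of_ne hxz with h2 | h2 <;>
    rcases lt_or_gt_of_ne hyz with h3 | h3
  · exact ⟨x, y, z, h1, h3, rfl⟩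
  · exact ⟨x, z, y, h2, h3, by ext; simp; tauto⟩
  · exact absurd (h1.trans h3) (not_lt.2 h2.le)
  · exact ⟨z, x, y, h2, h1, by ext; simp; tauto⟩
  · exact ⟨y, x, z, h1, h2, by ext; simp; tauto⟩
  · exact absurd (h1.trans h2) (not_lt.2 h3.le)
  · exact ⟨y, z, x, h3, h2, by ext; simp; tauto⟩
  · exact ⟨z, y, x, h3, h1, by ext; simp; tauto⟩

lemma chi_combo3 (p q x y z : ℝ × ℝ) (r s t : ℝ) (h : r + (s + t) = 1) :
    chi p (r • x + (s • y + t • z)) q = r * chi p x q + (s * chi p y q + t * chi p z q) := by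
  obtain rfl : r = 1 - s - t := by linarith
  unfold chi
  simp
  ring

lemma mem_Hl_triple {v : Fin m → ℝ × ℝ} {a b c : Fin m} (hab : a ≠ b) (hac : a ≠ c) (hbc : b ≠ c)
    {x : ℝ × ℝ} : x ∈ Hl v {a, b, c} ↔ ∃ r s t : ℝ, 0 ≤ r ∧ 0 ≤ s ∧ 0 ≤ t ∧ r + (s + t) = 1 ∧
      r • v a + (s • v b + t • v c) = x := by
  have hs : ∀ {M : Type} [AddCommMonoid M] (f : Fin m → M),
      ∑ i ∈ ({a, b, c} : Finset (Fin m)), f i = f a + (f b + f c) := by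
    intro M _ f
    rw [Finset.sum_insert (by simp [hab, hac]), Finset.sum_pair hbc]
  rw [mem_Hl]
  simp only [hs]
  constructor
  · rintro ⟨w, hw, h1, h2⟩
    exact ⟨w a, w b, w c, hw _ (by simp), hw _ (by simp), hw _ (by simp), h1, h2⟩
  · rintro ⟨r, s, t, hr, hs, ht, h1, h2⟩
    refine ⟨fun i => if i = a then r else if i = b then s else t, fun i hi => ?_, ?_, ?_⟩
    · dsimp only; split_ifs <;> assumption
    · simpa [hab.symm, hac.symm, hbc.symm] using h1
    · simpa [hab.symm, hac.symm, hbc.symm] using h2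

/-- A point different from `y, z` and on the segment is in the open segment. -/
lemma open_of_combo {x y z : ℝ × ℝ} {s t : ℝ} (hs : 0 ≤ s) (ht : 0 ≤ t) (hst : s + t = 1)
    (h : s • y + t • z = x) (hy : x ≠ y) (hz : x ≠ z) : x ∈ openSegment ℝ y z := by
  refine ⟨s, t, lt_of_le_of_ne hs ?_, lt_of_le_of_ne ht ?_, hst, h⟩
  · rintro rfl
    apply hz
    rw [← h, show t = 1 by linarith]; simp
  · rintro rfl
    apply hy
    rw [← h, show s = 1 by linarith]; simp

lemma Hl_openSegment {v : Fin m → ℝ × ℝ} {σ : Finset (Fin m)} {a b : Fin m} (ha : a ∈ σ)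
    (hb : b ∈ σ) {x : ℝ × ℝ} (hx : x ∈ openSegment ℝ (v a) (v b)) : x ∈ Hl v σ :=
  (Hl_convex v σ).segment_subset (vert_mem_Hl ha) (vert_mem_Hl hb) (openSegment_subset_segment _ _ _ hx)

lemma chi_zero_of_open {x y z : ℝ × ℝ} (h : x ∈ openSegment ℝ y z) : chi y x z = 0 := by
  obtain ⟨s, t, _, _, hst, rfl⟩ := h
  rw [chi_combo _ _ _ _ _ _ hst, chi_left, chi_right]; ring

/-- (V) -/
lemma Good.mem_tri {v : Fin m → ℝ × ℝ} (G : Good v) {τ : Finset (Fin m)} (hτ : τ.card = 3)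
    {a : Fin m} (ha : a ∉ τ) (hx : v a ∈ Hl v τ) :
    ∃ b ∈ τ, ∃ c ∈ τ, b ≠ c ∧ v a ∈ openSegment ℝ (v b) (v c) := by
  obtain ⟨b, c, d, hbc, hcd, rfl⟩ := exists_sorted_triple hτ
  simp only [Finset.mem_insert, Finset.mem_singleton, not_or] at ha
  obtain ⟨hab, hac, had⟩ := ha
  have hbd := hbc.trans hcd
  obtain ⟨r, s, t, hr, hs, ht, hsum, hx⟩ := (mem_Hl_triple hbc.ne hbd.ne hcd.ne).1 hx
  have nb : v a ≠ v b := fun h => hab (G.inj h)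
  have nc : v a ≠ v c := fun h => hac (G.inj h)
  have nd : v a ≠ v d := fun h => had (G.inj h)
  have F : ∀ p q, chi p (v a) q = r * chi p (v b) q + (s * chi p (v c) q + t * chi p (v d) q) := by
    intro p q; rw [← hx, chi_combo3 _ _ _ _ _ _ _ _ hsum]
  -- conclusions when a weight vanishes
  have R0 : r = 0 → ∃ b' ∈ ({b, c, d} : Finset (Fin m)), ∃ c' ∈ ({b, c, d} : Finset (Fin m)),
      b' ≠ c' ∧ v a ∈ openSegment ℝ (v b') (v c') := by
    rintro rfl
    exact ⟨c, by simp, d, by simp, hcd.ne, open_of_combo hs ht (by linarith) (by simpa using hx) nc nd⟩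
  have S0 : s = 0 → ∃ b' ∈ ({b, c, d} : Finset (Fin m)), ∃ c' ∈ ({b, c, d} : Finset (Fin m)),
      b' ≠ c' ∧ v a ∈ openSegment ℝ (v b') (v c') := by
    rintro rfl
    exact ⟨b, by simp, d, by simp, hbd.ne, open_of_combo hr ht (by linarith) (by simpa using hx) nb nd⟩
  have T0 : t = 0 → ∃ b' ∈ ({b, c, d} : Finset (Fin m)), ∃ c' ∈ ({b, c, d} : Finset (Fin m)),
      b' ≠ c' ∧ v a ∈ openSegment ℝ (v b') (v c') := by
    rintro rfl
    exact ⟨b, by simp, c, by simp, hbc.ne, open_of_combo hr hs (by linarith) (by simpa using hx) nb nc⟩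
  rcases lt_or_gt_of_ne hab with h1 | h1
  · -- a < b < c < d
    apply S0
    have e := F (v a) (v d)
    rw [chi_left, chi_right] at e
    have p1 := G.g1 a b d h1 hbd
    have p2 := G.g2 a b c d h1 hbc hcd
    nlinarith [mul_nonneg hr p1, mul_nonneg hs p2.le]
  rcases lt_or_gt_of_ne hac with h2 | h2
  · -- b < a < c < d
    have e := F (v b) (v a)
    rw [chi_left, chi_right, chi_swap, chi_swap _ _ (v d)] at e
    have p1 := G.g1 b a c h1 h2
    have p2 := G.g1 b a d h1 (h2.trans hcd)
    have q1 : s * chi (v b) (v a) (v c) = 0 := by nlinarith [mul_nonneg hs p1, mul_nonneg ht p2]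
    have q2 : t * chi (v b) (v a) (v d) = 0 := by nlinarith [mul_nonneg hs p1, mul_nonneg ht p2]
    rcases mul_eq_zero.1 q1 with h | h3
    · exact S0 h
    rcases mul_eq_zero.1 q2 with h | h4
    · exact T0 h
    exfalso
    have r1 := chi_rel (v b) (v a) (v c) (v d)
    have r2 := chi_sum (v b) (v a) (v c) (v d)
    have r3 := G.g2 b a c d h1 h2 hcd
    rw [h3, h4] at r1 r2
    have r4 : chi (v a) (v c) (v d) = chi (v b) (v c) (v d) := by linarith
    rw [r4] at r1
    rw [zero_smul, zero_smul, add_zero, add_zero] at r1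
    exact nb (smul_right_injective _ r3.ne' r1).symm
  rcases lt_or_gt_of_ne had with h3 | h3
  · -- b < c < a < d
    apply R0
    have e := F (v a) (v d)
    rw [chi_left, chi_right, chi_swap', chi_swap' (v c)] at e
    have p1 := G.g2 b c a d hbc h2 h3
    have p2 := G.g1 c a d h2 h3
    nlinarith [mul_nonneg hr p1.le, mul_nonneg hs p2]
  · -- b < c < d < a
    apply R0
    have e := F (v d) (v a)
    rw [chi_right, chi_left, chi_swap', chi_swap' (v c)] at e
    have p1 := G.g2 b c d a hbc hcd h3
    have p2 := G.g1 c d a hcd h3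
    nlinarith [mul_nonneg hr p1.le, mul_nonneg hs p2]

lemma IsExtreme.left_right {A B : Set (ℝ × ℝ)} (h : IsExtreme ℝ A B) {x y z : ℝ × ℝ}
    (hx : x ∈ A) (hy : y ∈ A) (hz : z ∈ B) (hzs : z ∈ openSegment ℝ x y) : x ∈ B ∧ y ∈ B :=
  ⟨h.2 hx hy hz hzs, h.2 hy hx hz (by rwa [openSegment_symm])⟩

lemma Good.flat_triple {v : Fin m → ℝ × ℝ} {σ : Finset (Fin m)} (hσ : σ.card = 3)
    (hN : NI v σ) {a b c : Fin m} (ha : a ∈ σ) (hb : b ∈ σ) (hc : c ∈ σ) (hab : a ≠ b)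
    (hac : a ≠ c) (hbc : b ≠ c) : chi (v a) (v b) (v c) ≠ 0 := by
  have hsub : ({a, b, c} : Finset (Fin m)) ⊆ σ := by
    intro x; simp; rintro (rfl | rfl | rfl) <;> assumption
  have : ({a, b, c} : Finset (Fin m)) = σ := Finset.eq_of_subset_of_card_le hsub (by
    rw [hσ, Finset.card_eq_three.2 ⟨a, b, c, hab, hac, hbc, rfl⟩])
  rw [← this] at hN
  exact (NI_triple hab hac hbc).1 hN

/-- (C) -/
lemma Good.mem_of_compat {v : Fin m → ℝ × ℝ} (G : Good v) {σ τ : Finset (Fin m)}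
    (hσ : σ.card = 3) (hτ : τ.card = 3) (hN : NI v σ) (hc : Compat v σ τ) {a : Fin m}
    (ha : a ∈ σ) (hx : v a ∈ Hl v τ) : a ∈ τ := by
  by_contra haτ
  obtain ⟨b, hb, c, hc', hbc, hopen⟩ := G.mem_tri hτ haτ hx
  have hboth := IsExtreme.left_right hc.2 (vert_mem_Hl hb) (vert_mem_Hl hc')
    ⟨vert_mem_Hl ha, hx⟩ hopen
  have key : ∀ b c, b ≠ c → v a ∈ openSegment ℝ (v b) (v c) → v b ∈ Hl v σ → b ∈ σ := by
    intro b c hbc hopen hb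
    by_contra hbσ
    obtain ⟨d, _, e, _, hde, ho⟩ := G.mem_tri hσ hbσ hb
    exact G.g4 a b c d e hopen hbc ho hde
  have hbσ := key b c hbc hopen hboth.1.1
  have hcσ := key c b hbc.symm (by rwa [openSegment_symm]) hboth.2.1
  have hab : a ≠ b := by rintro rfl; exact haτ hb
  have hac : a ≠ c := by rintro rfl; exact haτ hc'
  exact Good.flat_triple hσ hN hbσ ha hcσ hab.symm hbc hac (chi_zero_of_open hopen)

/-- (X) compatible triangles do not cross. -/
lemma Good.no_cross {v : Fin m → ℝ × ℝ} (G : Good v) {σ τ : Finset (Fin m)}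
    (hσ : σ.card = 3) (hτ : τ.card = 3) (hNσ : NI v σ) (hNτ : NI v τ) (hc : Compat v σ τ)
    {a b c d : Fin m} (hac : a < c) (hcb : c < b) (hbd : b < d) (ha : a ∈ τ) (hb : b ∈ τ)
    (hcσ : c ∈ σ) (hd : d ∈ σ) : False := by
  have rel := chi_rel (v a) (v c) (v b) (v d)
  have sm := chi_sum (v a) (v c) (v b) (v d)
  have p1 := G.g1 c b d hcb hbd
  have p2 := G.g1 a c d hac (hcb.trans hbd)
  have p3 := G.g2 a c b d hac hcb hbd
  have p4 := G.g1 a c b hac hcb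
  have hab := hac.trans hcb
  have hcd := hcb.trans hbd
  have had := hab.trans hbd
  have no4 : ∀ ρ : Finset (Fin m), ρ.card = 3 → a ∈ ρ → b ∈ ρ → c ∈ ρ → d ∈ ρ → False := by
    intro ρ hρ h1 h2 h3 h4
    have hs : ({a, c, b, d} : Finset (Fin m)) ⊆ ρ := by
      intro x; simp; rintro (rfl | rfl | rfl | rfl) <;> assumption
    have := Finset.card_le_card hs
    rw [hρ, Finset.card_insert_of_notMem (by simp [hac.ne, hab.ne, had.ne]),
      Finset.card_insert_of_notMem (by simp [hcb.ne, hcd.ne]),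
      Finset.card_insert_of_notMem (by simp [hbd.ne])] at this
    simp at this
  set S := chi (v a) (v b) (v d) + chi (v a) (v c) (v b) with hS
  have hSpos : 0 < S := by linarith
  set x := S⁻¹ • (chi (v c) (v b) (v d) • v a + chi (v a) (v c) (v d) • v b) with hx
  have hx1 : (chi (v c) (v b) (v d) / S) • v a + (chi (v a) (v c) (v d) / S) • v b = x := by
    rw [hx, smul_add, smul_smul, smul_smul, div_eq_inv_mul, div_eq_inv_mul]
  have hx2 : (chi (v a) (v b) (v d) / S) • v c + (chi (v a) (v c) (v b) / S) • v d = x := by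
    rw [hx, rel, smul_add, smul_smul, smul_smul, div_eq_inv_mul, div_eq_inv_mul]
  have s1 : chi (v c) (v b) (v d) / S + chi (v a) (v c) (v d) / S = 1 := by
    rw [← add_div, sm, div_self hSpos.ne']
  have s2 : chi (v a) (v b) (v d) / S + chi (v a) (v c) (v b) / S = 1 := by
    rw [← add_div, div_self hSpos.ne']
  have xτ : x ∈ Hl v τ := by
    rw [← hx1]
    exact Hl_convex v τ (vert_mem_Hl ha) (vert_mem_Hl hb) (by positivity) (by positivity) s1
  have xσ : x ∈ Hl v σ := by
    rw [← hx2]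
    exact Hl_convex v σ (vert_mem_Hl hcσ) (vert_mem_Hl hd) (by positivity) (by positivity) s2
  rcases p4.eq_or_lt with h4 | h4
  · -- `c` lies on `ab`
    have : v c = x := by
      rw [← hx2, ← h4]
      rw [← h4] at s2
      have : chi (v a) (v b) (v d) / S = 1 := by simpa using s2
      rw [this]; simp
    have hcτ := G.mem_of_compat hσ hτ hNσ hc hcσ (this ▸ xτ)
    exact Good.flat_triple hτ hNτ ha hcτ hb hac.ne hab.ne hcb.ne h4.symm
  rcases p1.eq_or_lt with h1 | h1
  · have : v b = x := by
      rw [← hx1, ← h1]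
      rw [← h1] at s1
      have : chi (v a) (v c) (v d) / S = 1 := by simpa using s1
      rw [this]; simp
    have hbσ := G.mem_of_compat hτ hσ hNτ hc.symm hb (this ▸ xσ)
    exact Good.flat_triple hσ hNσ hcσ hbσ hd hcb.ne hcd.ne hbd.ne h1.symm
  rcases p2.eq_or_lt with h2 | h2
  · have : v a = x := by
      rw [← hx1, ← h2]
      rw [← h2] at s1
      have : chi (v c) (v b) (v d) / S = 1 := by simpa using s1
      rw [this]; simp
    have haσ := G.mem_of_compat hτ hσ hNτ hc.symm ha (this ▸ xσ)
    exact Good.flat_triple hσ hNσ haσ hcσ hd hac.ne had.ne hcd.ne h2.symm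
  · have o1 : x ∈ openSegment ℝ (v a) (v b) := ⟨_, _, by positivity, by positivity, s1, hx1⟩
    have h := IsExtreme.left_right hc.2 (vert_mem_Hl ha) (vert_mem_Hl hb) ⟨xσ, xτ⟩ o1
    exact no4 σ hσ (G.mem_of_compat hτ hσ hNτ hc.symm ha h.1.1)
      (G.mem_of_compat hτ hσ hNτ hc.symm hb h.2.1) hcσ hd

end


section
variable {m : ℕ}

lemma q4_half {a b c d : ℝ × ℝ} {p q r s : ℝ} (hp : 0 ≤ p) (hq : 0 ≤ q) (hr : 0 ≤ r)
    (hs : 0 ≤ s) (hpos : 0 < r + s) (hsum : p + q = r + s)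
    (hrel : p • a + q • c = r • b + s • d) {α β γ δ : ℝ} (hα : 0 ≤ α) (hβ : 0 ≤ β) (hγ : 0 ≤ γ)
    (h1 : α + β + γ + δ = 1) (hle : β * s ≤ δ * r) (hδ : 0 ≤ δ) :
    ∃ α' γ' δ' : ℝ, 0 ≤ α' ∧ 0 ≤ γ' ∧ 0 ≤ δ' ∧ α' + (γ' + δ') = 1 ∧
      α' • a + (γ' • c + δ' • d) = α • a + β • b + γ • c + δ • d := by
  rcases hr.eq_or_lt with h0 | h0
  · subst h0
    have : β = 0 := by
      have hs' : 0 < s := by linarith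
      nlinarith
    subst this
    exact ⟨α, γ, δ, hα, hγ, hδ, by linarith, by ext <;> simp <;> ring⟩
  · have e1 := congrArg Prod.fst hrel
    have e2 := congrArg Prod.snd hrel
    simp at e1 e2
    refine ⟨α + β / r * p, γ + β / r * q, δ - β / r * s, by positivity, by positivity, ?_, ?_, ?_⟩
    · have : β / r * s = β * s / r := by ring
      rw [this, sub_nonneg, div_le_iff₀ h0]
      exact hle
    · have : β / r * r = β := by field_simp
      linear_combination h1 + (β / r) * hsum + this
    · have : β / r * r = β := by field_simp
      ext
      · simp
        linear_combination (β / r) * e1 + this * b.1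
      · simp
        linear_combination (β / r) * e2 + this * b.2

lemma mem_Hl_quad {v : Fin m → ℝ × ℝ} {a b c d : Fin m} (hab : a < b) (hbc : b < c) (hcd : c < d)
    {x : ℝ × ℝ} (hx : x ∈ Hl v {a, b, c, d}) :
    ∃ α β γ δ : ℝ, 0 ≤ α ∧ 0 ≤ β ∧ 0 ≤ γ ∧ 0 ≤ δ ∧ α + β + γ + δ = 1 ∧
      α • v a + β • v b + γ • v c + δ • v d = x := by
  have hac := hab.trans hbc
  have hbd := hbc.trans hcd
  have had := hac.trans hcd
  have hs : ∀ {M : Type} [AddCommMonoid M] (f : Fin m → M),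
      ∑ i ∈ ({a, b, c, d} : Finset (Fin m)), f i = f a + f b + f c + f d := by
    intro M _ f
    rw [Finset.sum_insert (by simp [hab.ne, hac.ne, had.ne]),
      Finset.sum_insert (by simp [hbc.ne, hbd.ne]), Finset.sum_pair hcd.ne]
    simp [add_assoc]
  obtain ⟨w, hw, h1, h2⟩ := mem_Hl.1 hx
  rw [hs] at h1 h2
  exact ⟨w a, w b, w c, w d, hw _ (by simp), hw _ (by simp), hw _ (by simp), hw _ (by simp), h1, h2⟩

lemma Good.q4_ac {v : Fin m → ℝ × ℝ} (G : Good v) {a b c d : Fin m} (hab : a < b) (hbc : b < c)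
    (hcd : c < d) {x : ℝ × ℝ} (hx : x ∈ Hl v {a, b, c, d}) :
    x ∈ Hl v {a, b, c} ∨ x ∈ Hl v {a, c, d} := by
  obtain ⟨α, β, γ, δ, h1, h2, h3, h4, h5, rfl⟩ := mem_Hl_quad hab hbc hcd hx
  have hac := hab.trans hbc
  have hbd := hbc.trans hcd
  have had := hac.trans hcd
  have p1 := G.g1 b c d hbc hcd
  have p2 := G.g1 a b d hab hbd
  have p3 := G.g2 a b c d hab hbc hcd
  have p4 := G.g1 a b c hab hbc
  have rel := chi_rel (v a) (v b) (v c) (v d)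
  have sm := chi_sum (v a) (v b) (v c) (v d)
  rcases le_total (β * chi (v a) (v b) (v c)) (δ * chi (v a) (v c) (v d)) with h | h
  · right
    obtain ⟨r, s, t, hr, hs, ht, e1, e2⟩ :=
      q4_half p1 p2 p3.le p4 (by linarith) sm rel h1 h2 h3 h5 h h4
    exact (mem_Hl_triple hac.ne had.ne hcd.ne).2 ⟨r, s, t, hr, hs, ht, e1, e2⟩
  · left
    obtain ⟨r, s, t, hr, hs, ht, e1, e2⟩ :=
      q4_half p1 p2 p4 p3.le (by linarith) (by linarith) (by rw [rel, add_comm])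
        h1 h4 h3 (by linarith) h h2 (b := v d) (d := v b)
    exact (mem_Hl_triple hab.ne hac.ne hbc.ne).2 ⟨r, t, s, hr, ht, hs, by linarith, by
      rw [add_comm (t • v b), e2]; abel⟩

lemma Good.q4_bd {v : Fin m → ℝ × ℝ} (G : Good v) {a b c d : Fin m} (hab : a < b) (hbc : b < c)
    (hcd : c < d) {x : ℝ × ℝ} (hx : x ∈ Hl v {a, b, c, d}) :
    x ∈ Hl v {a, b, d} ∨ x ∈ Hl v {b, c, d} := by
  obtain ⟨α, β, γ, δ, h1, h2, h3, h4, h5, rfl⟩ := mem_Hl_quad hab hbc hcd hx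
  have hac := hab.trans hbc
  have hbd := hbc.trans hcd
  have had := hac.trans hcd
  have p1 := G.g1 b c d hbc hcd
  have p2 := G.g1 a b d hab hbd
  have p3 := G.g2 a b c d hab hbc hcd
  have p4 := G.g1 a b c hab hbc
  have rel := chi_rel (v a) (v b) (v c) (v d)
  have sm := chi_sum (v a) (v b) (v c) (v d)
  rcases le_total (α * chi (v a) (v b) (v d)) (γ * chi (v b) (v c) (v d)) with h | h
  · right
    obtain ⟨r, s, t, hr, hs, ht, e1, e2⟩ :=
      q4_half p3.le p4 p1 p2 (by linarith) sm.symm rel.symm h2 h1 h4 (by linarith) h h3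
    exact (mem_Hl_triple hbc.ne hbd.ne hcd.ne).2 ⟨r, t, s, hr, ht, hs, by linarith, by
      rw [add_comm (t • v c), e2]; abel⟩
  · left
    obtain ⟨r, s, t, hr, hs, ht, e1, e2⟩ :=
      q4_half p3.le p4 p2 p1 (by linarith) (by linarith) (by rw [← rel, add_comm])
        h2 h3 h4 (by linarith) h h1 (b := v c) (d := v a)
    exact (mem_Hl_triple hab.ne had.ne hbd.ne).2 ⟨t, r, s, ht, hr, hs, by linarith, by
      rw [add_comm (t • v a), add_assoc, add_comm (s • v d) (t • v a), ] at *
      rw [e2]; abel⟩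

/-- Splitting the hull of an interval along the triangle `i k j`. -/
lemma Good.hull_split {v : Fin m → ℝ × ℝ} (G : Good v) {i k j : Fin m} (hik : i < k) (hkj : k < j)
    {x : ℝ × ℝ} (hx : x ∈ Hl v (Finset.Icc i j)) :
    x ∈ Hl v (Finset.Icc i k) ∨ x ∈ Hl v {i, k, j} ∨ x ∈ Hl v (Finset.Icc k j) := by
  have mem3 : ∀ {a b c l r : Fin m}, l ≤ a → a ≤ r → l ≤ b → b ≤ r → l ≤ c → c ≤ r →
      ({a, b, c} : Finset (Fin m)) ⊆ Finset.Icc l r := by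
    intro a b c l r h1 h2 h3 h4 h5 h6 y hy
    simp only [Finset.mem_insert, Finset.mem_singleton] at hy
    rw [Finset.mem_Icc]
    rcases hy with rfl | rfl | rfl <;> constructor <;> assumption
  have stepj : ∀ c, k < c → c ≤ j → ∀ y ∈ Hl v {i, k, c},
      y ∈ Hl v (Finset.Icc i k) ∨ y ∈ Hl v {i, k, j} ∨ y ∈ Hl v (Finset.Icc k j) := by
    intro c hc hcj y hy
    rcases hcj.eq_or_lt with rfl | hcj
    · exact Or.inr (Or.inl hy)
    rcases G.q4_bd hik hc hcj (Hl_mono (by intro z; simp; tauto) hy) with h | h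
    · exact Or.inr (Or.inl h)
    · exact Or.inr (Or.inr (Hl_mono (mem3 le_rfl hkj.le hc.le hcj.le hkj.le le_rfl) h))
  have step : ∀ a c, i ≤ a → a < k → k < c → c ≤ j → ∀ y ∈ Hl v {a, k, c},
      y ∈ Hl v (Finset.Icc i k) ∨ y ∈ Hl v {i, k, j} ∨ y ∈ Hl v (Finset.Icc k j) := by
    intro a c hia hak hkc hcj y hy
    rcases hia.eq_or_lt with rfl | hia
    · exact stepj c hkc hcj y hy
    rcases G.q4_ac hia hak hkc (Hl_mono (by intro z; simp; tauto) hy) with h | h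
    · exact Or.inl (Hl_mono (mem3 le_rfl hik.le hia.le hak.le hik.le le_rfl) h)
    · exact stepj c hkc hcj y h
  -- Caratheodory
  unfold Hl at hx
  rw [convexHull_eq_union] at hx
  simp only [Set.mem_iUnion] at hx
  obtain ⟨t, ht, hind, hx⟩ := hx
  have hcard : t.card ≤ 3 := by
    have := hind.card_le_finrank_succ
    have h2 := Submodule.finrank_le (vectorSpan ℝ (Set.range ((↑) : t → ℝ × ℝ)))
    simp at this h2
    omega
  set ρ : Finset (Fin m) := (Finset.Icc i j).filter (fun a => v a ∈ t) with hρ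
  have hρt : v '' ↑ρ = ↑t := by
    ext y
    constructor
    · rintro ⟨a, ha, rfl⟩
      exact (Finset.mem_filter.1 ha).2
    · intro hy
      obtain ⟨a, ha, rfl⟩ := ht hy
      exact ⟨a, Finset.mem_coe.2 (Finset.mem_filter.2 ⟨ha, hy⟩), rfl⟩
  have hρcard : ρ.card ≤ 3 := by
    refine le_trans ?_ hcard
    apply Finset.card_le_card_of_injOn v (fun a ha => (Finset.mem_filter.1 ha).2)
      G.inj.injOn
  have hxρ : x ∈ Hl v ρ := by unfold Hl; rw [hρt]; exact hx
  have hρA : ∀ a ∈ ρ, i ≤ a ∧ a ≤ j := fun a ha => Finset.mem_Icc.1 (Finset.mem_filter.1 ha).1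
  have hne : ρ.Nonempty := by
    by_contra h
    rw [Finset.not_nonempty_iff_eq_empty] at h
    rw [h] at hxρ
    simp [Hl] at hxρ
  clear_value ρ
  set a := ρ.min' hne with ha
  set c := ρ.max' hne with hc
  have haρ : a ∈ ρ := ρ.min'_mem hne
  have hcρ : c ∈ ρ := ρ.max'_mem hne
  have hmin : ∀ y ∈ ρ, a ≤ y := fun y hy => ρ.min'_le y hy
  have hmax : ∀ y ∈ ρ, y ≤ c := fun y hy => ρ.le_max' y hy
  clear_value a c
  rcases le_or_gt c k with h1 | h1
  · exact Or.inl (Hl_mono (fun y hy => Finset.mem_Icc.2 ⟨(hρA y hy).1, (hmax y hy).trans h1⟩) hxρ)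
  rcases le_or_gt k a with h2 | h2
  · exact Or.inr (Or.inr
      (Hl_mono (fun y hy => Finset.mem_Icc.2 ⟨h2.trans (hmin y hy), (hρA y hy).2⟩) hxρ))
  have hac : a < c := h2.trans h1
  obtain ⟨b, hb, hsub⟩ : ∃ b ∈ ρ, ρ ⊆ {a, b, c} := by
    by_cases h : ∃ b ∈ ρ, b ≠ a ∧ b ≠ c
    · obtain ⟨b, hb, hba, hbc⟩ := h
      refine ⟨b, hb, ?_⟩
      have hs : ({a, b, c} : Finset (Fin m)) ⊆ ρ := by
        intro y; simp; rintro (rfl | rfl | rfl) <;> assumption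
      rw [Finset.eq_of_subset_of_card_le hs (by
        rw [Finset.card_eq_three.2 ⟨a, b, c, hba.symm, hac.ne, hbc, rfl⟩]; exact hρcard)]
    · push Not at h
      refine ⟨a, haρ, fun y hy => ?_⟩
      by_cases hya : y = a
      · simp [hya]
      · simp [h y hy hya]
  have hia := (hρA a haρ).1
  have hcj := (hρA c hcρ).2
  have hab := hmin b hb
  have hbc := hmax b hb
  rcases lt_trichotomy b k with h3 | h3 | h3
  · rcases hab.eq_or_lt with h4 | h4
    · exact step a c hia h2 h1 hcj x (Hl_mono (hsub.trans (by rw [← h4]; intro z; simp; tauto)) hxρ)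
    · rcases G.q4_ac h4 h3 h1 (Hl_mono (hsub.trans (by intro z; simp; tauto)) hxρ) with h | h
      · exact Or.inl (Hl_mono (mem3 hia h2.le (hia.trans hab) h3.le hik.le le_rfl) h)
      · exact step a c hia h2 h1 hcj x h
  · exact step a c hia h2 h1 hcj x (Hl_mono (by rw [h3] at hsub; exact hsub) hxρ)
  · rcases hbc.eq_or_lt with h4 | h4
    · exact step a c hia h2 h1 hcj x (Hl_mono (hsub.trans (by rw [← h4]; intro z; simp; tauto)) hxρ)
    · rcases G.q4_bd h2 h3 h4 (Hl_mono (hsub.trans (by intro z; simp; tauto)) hxρ) with h | h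
      · exact step a c hia h2 h1 hcj x h
      · exact Or.inr (Or.inr (Hl_mono (mem3 le_rfl hkj.le h3.le (hbc.trans hcj) h1.le hcj) h))

end


section
variable {m : ℕ}

/-- Triangulations of the subconfiguration indexed by `A` (the empty set is a triangulation of
a degenerate subconfiguration). -/
def TriOn (v : Fin m → ℝ × ℝ) (A : Finset (Fin m)) (T : Finset (Finset (Fin m))) : Prop :=
  (∀ σ ∈ T, σ ⊆ A ∧ σ.card = 3 ∧ NI v σ) ∧
  (interior (Hl v A) ⊆ ⋃ σ ∈ T, Hl v σ) ∧
  ∀ σ ∈ T, ∀ τ ∈ T, Compat v σ τ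

/-- The middle triangle, if it is not degenerate. -/
noncomputable def midTri (v : Fin m → ℝ × ℝ) (i k j : Fin m) : Finset (Finset (Fin m)) :=
  if chi (v i) (v k) (v j) ≠ 0 then {{i, k, j}} else ∅

lemma mem_midTri {v : Fin m → ℝ × ℝ} {i k j : Fin m} {σ : Finset (Fin m)} :
    σ ∈ midTri v i k j ↔ σ = {i, k, j} ∧ chi (v i) (v k) (v j) ≠ 0 := by
  unfold midTri
  split_ifs with h <;> simp [h]

lemma Good.sgn1 {v : Fin m → ℝ × ℝ} (G : Good v) {a b c : Fin m} (h1 : a ≤ b) (h2 : b ≤ c) :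
    0 ≤ chi (v a) (v b) (v c) := by
  rcases h1.eq_or_lt with rfl | h1
  · rw [chi_left]
  rcases h2.eq_or_lt with rfl | h2
  · rw [chi_right]
  exact G.g1 a b c h1 h2

lemma Good.sgn2 {v : Fin m → ℝ × ℝ} (G : Good v) {i k b : Fin m} (h1 : i ≤ k) (h2 : k ≤ b) :
    chi (v i) (v b) (v k) ≤ 0 := by
  rw [chi_swap]; linarith [G.sgn1 h1 h2]

lemma Good.sgn3 {v : Fin m → ℝ × ℝ} (G : Good v) {b k j : Fin m} (h1 : b ≤ k) (h2 : k ≤ j) :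
    chi (v k) (v b) (v j) ≤ 0 := by
  rw [chi_swap']; linarith [G.sgn1 h1 h2]

lemma Good.zero_end {v : Fin m → ℝ × ℝ} (G : Good v) {σ : Finset (Fin m)} {a c l : Fin m}
    (hs : σ ⊆ Finset.Icc a c) (hc : σ.card = 3) (hN : NI v σ)
    (hout : (∃ e, e < a) ∨ ∃ e, c < e) (hl : l ∈ σ) (h0 : chi (v a) (v l) (v c) = 0) :
    l = a ∨ l = c := by
  by_contra hcon
  push Not at hcon
  have hlA := Finset.mem_Icc.1 (hs hl)
  have hal : a < l := lt_of_le_of_ne hlA.1 (Ne.symm hcon.1)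
  have hlc : l < c := lt_of_le_of_ne hlA.2 hcon.2
  by_cases he : ∃ e ∈ σ, e ≠ a ∧ e ≠ l ∧ e ≠ c
  · obtain ⟨e, heσ, hea, hel, hec⟩ := he
    have heA := Finset.mem_Icc.1 (hs heσ)
    have hae : a < e := lt_of_le_of_ne heA.1 (Ne.symm hea)
    have hec : e < c := lt_of_le_of_ne heA.2 hec
    rcases lt_or_gt_of_ne hel with h | h
    · have := G.g2 a e l c hae h hlc; linarith
    · have := G.g3 a l e c hal h hec hout; linarith
  · push Not at he
    have hsub : σ ⊆ {a, l, c} := by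
      intro e heσ
      by_cases h1 : e = a
      · simp [h1]
      by_cases h2 : e = l
      · simp [h2]
      simp [he e heσ h1 h2]
    have hac := hal.trans hlc
    have : σ = {a, l, c} := Finset.eq_of_subset_of_card_le hsub (by
      rw [Finset.card_eq_three.2 ⟨a, l, c, hal.ne, hac.ne, hlc.ne, rfl⟩, hc])
    rw [this, NI_triple hal.ne hac.ne hlc.ne] at hN
    exact hN h0

lemma Hl_singleton (v : Fin m → ℝ × ℝ) (k : Fin m) : Hl v {k} = {v k} := by
  simp [Hl]

lemma Good.compat_LR {v : Fin m → ℝ × ℝ} (G : Good v) {i k j : Fin m} (hik : i < k) (hkj : k < j)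
    {σ τ : Finset (Fin m)} (hσ : σ ⊆ Finset.Icc i k) (hσc : σ.card = 3) (hσN : NI v σ)
    (hτ : τ ⊆ Finset.Icc k j) (hτN : NI v τ) : Compat v σ τ := by
  refine compat_of_subset hσN hτN ?_
  rintro x ⟨hxσ, hxτ⟩
  have f1 : ∀ a ∈ σ, 0 ≤ chi (v i) (v a) (v k) := fun a ha =>
    G.sgn1 (Finset.mem_Icc.1 (hσ ha)).1 (Finset.mem_Icc.1 (hσ ha)).2
  have f2 : ∀ a ∈ τ, chi (v i) (v a) (v k) ≤ 0 := fun a ha =>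
    G.sgn2 hik.le (Finset.mem_Icc.1 (hτ ha)).1
  have f0 : chi (v i) x (v k) = 0 := le_antisymm (Hl_nonpos f2 hxτ) (Hl_nonneg f1 hxσ)
  have h1 := Hl_zero (ρ := {i, k}) f1 (fun l hl h0 => by
    have := G.zero_end hσ hσc hσN (Or.inr ⟨j, hkj⟩) hl h0
    simpa using this) hxσ f0
  obtain ⟨a, l, c, hal, hlc, hσe⟩ := exists_sorted_triple hσc
  have hil : i < l := lt_of_le_of_lt (Finset.mem_Icc.1 (hσ (by rw [hσe]; simp : a ∈ σ))).1 hal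
  have hlk : l < k := lt_of_lt_of_le hlc (Finset.mem_Icc.1 (hσ (by rw [hσe]; simp : c ∈ σ))).2
  have h2 := Hl_zero' (ρ := {k}) f2 (fun b hb h0 => by
    by_contra hbk
    have hbk : b ≠ k := by simpa using hbk
    have hkb : k < b := lt_of_le_of_ne (Finset.mem_Icc.1 (hτ hb)).1 (Ne.symm hbk)
    have := G.g2 i l k b hil hlk hkb
    rw [chi_swap] at h0
    linarith) hxτ f0
  have hxk : x = v k := by
    have := Hl_mono Finset.inter_subset_right h2
    rw [Hl_singleton] at this
    exact this
  have hkτ : k ∈ τ := by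
    by_contra h
    rw [Finset.inter_singleton_of_notMem h] at h2
    simp [Hl] at h2
  have hkσ : k ∈ σ := by
    by_contra h
    have hsub : σ ∩ {i, k} ⊆ {i} := by
      intro y hy
      simp only [Finset.mem_inter, Finset.mem_insert, Finset.mem_singleton] at hy ⊢
      rcases hy.2 with h' | h'
      · exact h'
      · exact absurd (h' ▸ hy.1) h
    have := Hl_mono hsub h1
    rw [Hl_singleton, hxk] at this
    exact hik.ne' (G.inj this)
  rw [hxk]
  exact vert_mem_Hl (Finset.mem_inter.2 ⟨hkσ, hkτ⟩)

lemma Good.compat_Lmid {v : Fin m → ℝ × ℝ} (G : Good v) {i k j : Fin m} (hik : i < k) (hkj : k < j)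
    {σ : Finset (Fin m)} (hσ : σ ⊆ Finset.Icc i k) (hσc : σ.card = 3) (hσN : NI v σ)
    (hN : NI v {i, k, j}) : Compat v σ {i, k, j} := by
  refine compat_of_subset hσN hN ?_
  rintro x ⟨hxσ, hxτ⟩
  have f1 : ∀ a ∈ σ, 0 ≤ chi (v i) (v a) (v k) := fun a ha =>
    G.sgn1 (Finset.mem_Icc.1 (hσ ha)).1 (Finset.mem_Icc.1 (hσ ha)).2
  have f2 : ∀ a ∈ ({i, k, j} : Finset (Fin m)), chi (v i) (v a) (v k) ≤ 0 := by
    intro a ha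
    simp only [Finset.mem_insert, Finset.mem_singleton] at ha
    rcases ha with rfl | rfl | rfl
    · rw [chi_left]
    · rw [chi_right]
    · exact G.sgn2 hik.le hkj.le
  have f0 : chi (v i) x (v k) = 0 := le_antisymm (Hl_nonpos f2 hxτ) (Hl_nonneg f1 hxσ)
  exact Hl_zero f1 (fun l hl h0 => by
    have := G.zero_end hσ hσc hσN (Or.inr ⟨j, hkj⟩) hl h0
    rcases this with rfl | rfl <;> simp) hxσ f0

lemma Good.compat_Rmid {v : Fin m → ℝ × ℝ} (G : Good v) {i k j : Fin m} (hik : i < k) (hkj : k < j)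
    {σ : Finset (Fin m)} (hσ : σ ⊆ Finset.Icc k j) (hσc : σ.card = 3) (hσN : NI v σ)
    (hN : NI v {i, k, j}) : Compat v σ {i, k, j} := by
  refine compat_of_subset hσN hN ?_
  rintro x ⟨hxσ, hxτ⟩
  have f1 : ∀ a ∈ σ, 0 ≤ chi (v k) (v a) (v j) := fun a ha =>
    G.sgn1 (Finset.mem_Icc.1 (hσ ha)).1 (Finset.mem_Icc.1 (hσ ha)).2
  have f2 : ∀ a ∈ ({i, k, j} : Finset (Fin m)), chi (v k) (v a) (v j) ≤ 0 := by
    intro a ha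
    simp only [Finset.mem_insert, Finset.mem_singleton] at ha
    rcases ha with rfl | rfl | rfl
    · exact G.sgn3 hik.le hkj.le
    · rw [chi_left]
    · rw [chi_right]
  have f0 : chi (v k) x (v j) = 0 := le_antisymm (Hl_nonpos f2 hxτ) (Hl_nonneg f1 hxσ)
  exact Hl_zero f1 (fun l hl h0 => by
    have := G.zero_end hσ hσc hσN (Or.inl ⟨i, hik⟩) hl h0
    rcases this with rfl | rfl <;> simp) hxσ f0

lemma isClosed_tri (v : Fin m → ℝ × ℝ) (T : Finset (Finset (Fin m))) :
    IsClosed (⋃ σ ∈ T, Hl v σ) :=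
  T.finite_toSet.isClosed_biUnion fun σ _ => Hl_closed v σ

/-- Gluing. -/
lemma Good.glue {v : Fin m → ℝ × ℝ} (G : Good v) {i k j : Fin m} (hik : i < k) (hkj : k < j)
    {L R : Finset (Finset (Fin m))} (hL : TriOn v (Finset.Icc i k) L)
    (hR : TriOn v (Finset.Icc k j) R) : TriOn v (Finset.Icc i j) (midTri v i k j ∪ L ∪ R) := by
  have hij := hik.trans hkj
  have hIL : Finset.Icc i k ⊆ Finset.Icc i j := Finset.Icc_subset_Icc le_rfl hkj.le
  have hIR : Finset.Icc k j ⊆ Finset.Icc i j := Finset.Icc_subset_Icc hik.le le_rfl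
  refine ⟨?_, ?_, ?_⟩
  · intro σ hσ
    simp only [Finset.mem_union, mem_midTri] at hσ
    rcases hσ with (⟨rfl, h⟩ | h) | h
    · refine ⟨?_, Finset.card_eq_three.2 ⟨i, k, j, hik.ne, hij.ne, hkj.ne, rfl⟩,
        (NI_triple hik.ne hij.ne hkj.ne).2 h⟩
      intro y hy
      simp only [Finset.mem_insert, Finset.mem_singleton] at hy
      rw [Finset.mem_Icc]
      rcases hy with rfl | rfl | rfl
      · exact ⟨le_rfl, hij.le⟩
      · exact ⟨hik.le, hkj.le⟩
      · exact ⟨hij.le, le_rfl⟩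
    · exact ⟨(hL.1 σ h).1.trans hIL, (hL.1 σ h).2⟩
    · exact ⟨(hR.1 σ h).1.trans hIR, (hR.1 σ h).2⟩
  · -- cover
    have nik : v i ≠ v k := fun h => hik.ne (G.inj h)
    have nkj : v k ≠ v j := fun h => hkj.ne (G.inj h)
    set V := interior (Hl v (Finset.Icc i j)) with hV
    have fL : ∀ x ∈ Hl v (Finset.Icc i k), 0 ≤ chi (v i) x (v k) := fun x hx =>
      Hl_nonneg (fun a ha => G.sgn1 (Finset.mem_Icc.1 ha).1 (Finset.mem_Icc.1 ha).2) hx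
    have fR : ∀ x ∈ Hl v (Finset.Icc k j), chi (v i) x (v k) ≤ 0 := fun x hx =>
      Hl_nonpos (fun a ha => G.sgn2 hik.le (Finset.mem_Icc.1 ha).1) hx
    have fM : ∀ x ∈ Hl v {i, k, j}, chi (v i) x (v k) ≤ 0 := fun x hx =>
      Hl_nonpos (fun a ha => by
        simp only [Finset.mem_insert, Finset.mem_singleton] at ha
        rcases ha with rfl | rfl | rfl
        · rw [chi_left]
        · rw [chi_right]
        · exact G.sgn2 hik.le hkj.le) hx
    have gR : ∀ x ∈ Hl v (Finset.Icc k j), 0 ≤ chi (v k) x (v j) := fun x hx =>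
      Hl_nonneg (fun a ha => G.sgn1 (Finset.mem_Icc.1 ha).1 (Finset.mem_Icc.1 ha).2) hx
    have gL : ∀ x ∈ Hl v (Finset.Icc i k), chi (v k) x (v j) ≤ 0 := fun x hx =>
      Hl_nonpos (fun a ha => G.sgn3 (Finset.mem_Icc.1 ha).2 hkj.le) hx
    have gM : ∀ x ∈ Hl v {i, k, j}, chi (v k) x (v j) ≤ 0 := fun x hx =>
      Hl_nonpos (fun a ha => by
        simp only [Finset.mem_insert, Finset.mem_singleton] at ha
        rcases ha with rfl | rfl | rfl
        · exact G.sgn3 hik.le hkj.le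
        · rw [chi_left]
        · rw [chi_right]) hx
    have cL : V ∩ {x | 0 < chi (v i) x (v k)} ⊆ ⋃ σ ∈ L, Hl v σ := by
      refine subset_trans ?_ hL.2.1
      apply interior_maximal
      · rintro x ⟨hx, hf⟩
        have hf : 0 < chi (v i) x (v k) := hf
        rcases G.hull_split hik hkj (interior_subset hx) with h | h | h
        · exact h
        · linarith [fM x h]
        · linarith [fR x h]
      · exact isOpen_interior.inter (isOpen_lt continuous_const (chi_continuous _ _))
    have cR : V ∩ {x | 0 < chi (v k) x (v j)} ⊆ ⋃ σ ∈ R, Hl v σ := by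
      refine subset_trans ?_ hR.2.1
      apply interior_maximal
      · rintro x ⟨hx, hf⟩
        have hf : 0 < chi (v k) x (v j) := hf
        rcases G.hull_split hik hkj (interior_subset hx) with h | h | h
        · linarith [gL x h]
        · linarith [gM x h]
        · exact h
      · exact isOpen_interior.inter (isOpen_lt continuous_const (chi_continuous _ _))
    have hd : Dense ({x | chi (v i) x (v k) ≠ 0} ∩ {x | chi (v k) x (v j) ≠ 0}) :=
      (chi_dense nik).inter_of_isOpen_left (chi_dense nkj)
        (isOpen_ne_fun (chi_continuous _ _) continuous_const)
    refine (hd.open_subset_closure_inter isOpen_interior).trans ?_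
    apply closure_minimal _ (isClosed_tri v _)
    rintro x ⟨hx, hf, hg⟩
    have hf : chi (v i) x (v k) ≠ 0 := hf
    have hg : chi (v k) x (v j) ≠ 0 := hg
    simp only [Set.mem_iUnion]
    rcases G.hull_split hik hkj (interior_subset hx) with h | h | h
    · have := cL ⟨hx, lt_of_le_of_ne (fL x h) (Ne.symm hf)⟩
      simp only [Set.mem_iUnion] at this
      obtain ⟨σ, hσ, hxσ⟩ := this
      exact ⟨σ, by simp [hσ], hxσ⟩
    · by_cases h0 : chi (v i) (v k) (v j) = 0
      · exfalso
        apply hf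
        refine le_antisymm (fM x h) (Hl_nonneg (fun a ha => ?_) h)
        simp only [Finset.mem_insert, Finset.mem_singleton] at ha
        rcases ha with rfl | rfl | rfl
        · rw [chi_left]
        · rw [chi_right]
        · rw [chi_swap, h0]; simp
      · exact ⟨{i, k, j}, by simp [mem_midTri, h0], h⟩
    · have := cR ⟨hx, lt_of_le_of_ne (gR x h) (Ne.symm hg)⟩
      simp only [Set.mem_iUnion] at this
      obtain ⟨σ, hσ, hxσ⟩ := this
      exact ⟨σ, by simp [hσ], hxσ⟩
  · intro σ hσ τ hτ
    simp only [Finset.mem_union, mem_midTri] at hσ hτ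
    rcases hσ with (⟨rfl, h⟩ | h) | h <;> rcases hτ with (⟨rfl, h'⟩ | h') | h'
    · exact Compat.self _ _
    · obtain ⟨a1, a2, a3⟩ := hL.1 _ h'
      exact (G.compat_Lmid hik hkj a1 a2 a3 ((NI_triple hik.ne hij.ne hkj.ne).2 h)).symm
    · obtain ⟨a1, a2, a3⟩ := hR.1 _ h'
      exact (G.compat_Rmid hik hkj a1 a2 a3 ((NI_triple hik.ne hij.ne hkj.ne).2 h)).symm
    · obtain ⟨a1, a2, a3⟩ := hL.1 _ h
      exact G.compat_Lmid hik hkj a1 a2 a3 ((NI_triple hik.ne hij.ne hkj.ne).2 h')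
    · exact hL.2.2 _ h _ h'
    · obtain ⟨a1, a2, a3⟩ := hL.1 _ h
      obtain ⟨b1, b2, b3⟩ := hR.1 _ h'
      exact G.compat_LR hik hkj a1 a2 a3 b1 b3
    · obtain ⟨a1, a2, a3⟩ := hR.1 _ h
      exact G.compat_Rmid hik hkj a1 a2 a3 ((NI_triple hik.ne hij.ne hkj.ne).2 h')
    · obtain ⟨a1, a2, a3⟩ := hL.1 _ h'
      obtain ⟨b1, b2, b3⟩ := hR.1 _ h
      exact (G.compat_LR hik hkj a1 a2 a3 b1 b3).symm
    · exact hR.2.2 _ h _ h'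

end


section
variable {m : ℕ}

lemma Good.split_of {v : Fin m → ℝ × ℝ} (G : Good v) {i k j : Fin m} (hik : i < k) (hkj : k < j)
    {T : Finset (Finset (Fin m))} (hT : TriOn v (Finset.Icc i j) T)
    (h1 : ∀ ρ ∈ T, ρ = {i, k, j} ∨ ρ ⊆ Finset.Icc i k ∨ ρ ⊆ Finset.Icc k j)
    (h2 : midTri v i k j ⊆ T) :
    ∃ L R, TriOn v (Finset.Icc i k) L ∧ TriOn v (Finset.Icc k j) R ∧
      T = midTri v i k j ∪ L ∪ R := by
  classical
  have hij := hik.trans hkj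
  have hIL : Finset.Icc i k ⊆ Finset.Icc i j := Finset.Icc_subset_Icc le_rfl hkj.le
  have hIR : Finset.Icc k j ⊆ Finset.Icc i j := Finset.Icc_subset_Icc hik.le le_rfl
  have nik : v i ≠ v k := fun h => hik.ne (G.inj h)
  have nkj : v k ≠ v j := fun h => hkj.ne (G.inj h)
  have fL : ∀ x ∈ Hl v (Finset.Icc i k), 0 ≤ chi (v i) x (v k) := fun x hx =>
    Hl_nonneg (fun a ha => G.sgn1 (Finset.mem_Icc.1 ha).1 (Finset.mem_Icc.1 ha).2) hx
  have fR : ∀ x ∈ Hl v (Finset.Icc k j), chi (v i) x (v k) ≤ 0 := fun x hx =>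
    Hl_nonpos (fun a ha => G.sgn2 hik.le (Finset.mem_Icc.1 ha).1) hx
  have fM : ∀ x ∈ Hl v {i, k, j}, chi (v i) x (v k) ≤ 0 := fun x hx =>
    Hl_nonpos (fun a ha => by
      simp only [Finset.mem_insert, Finset.mem_singleton] at ha
      rcases ha with rfl | rfl | rfl
      · rw [chi_left]
      · rw [chi_right]
      · exact G.sgn2 hik.le hkj.le) hx
  have gR : ∀ x ∈ Hl v (Finset.Icc k j), 0 ≤ chi (v k) x (v j) := fun x hx =>
    Hl_nonneg (fun a ha => G.sgn1 (Finset.mem_Icc.1 ha).1 (Finset.mem_Icc.1 ha).2) hx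
  have gL : ∀ x ∈ Hl v (Finset.Icc i k), chi (v k) x (v j) ≤ 0 := fun x hx =>
    Hl_nonpos (fun a ha => G.sgn3 (Finset.mem_Icc.1 ha).2 hkj.le) hx
  have gM : ∀ x ∈ Hl v {i, k, j}, chi (v k) x (v j) ≤ 0 := fun x hx =>
    Hl_nonpos (fun a ha => by
      simp only [Finset.mem_insert, Finset.mem_singleton] at ha
      rcases ha with rfl | rfl | rfl
      · exact G.sgn3 hik.le hkj.le
      · rw [chi_left]
      · rw [chi_right]) hx
  refine ⟨T.filter (· ⊆ Finset.Icc i k), T.filter (· ⊆ Finset.Icc k j), ⟨?_, ?_, ?_⟩,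
    ⟨?_, ?_, ?_⟩, ?_⟩
  · intro σ hσ
    rw [Finset.mem_filter] at hσ
    exact ⟨hσ.2, (hT.1 σ hσ.1).2⟩
  · intro x hx
    have hp := chi_pos_of_interior nik fL hx
    have hx' := hT.2.1 (interior_mono (Hl_mono hIL) hx)
    simp only [Set.mem_iUnion] at hx' ⊢
    obtain ⟨ρ, hρ, hxρ⟩ := hx'
    refine ⟨ρ, ?_, hxρ⟩
    rcases h1 ρ hρ with rfl | h | h
    · linarith [fM x hxρ]
    · exact Finset.mem_filter.2 ⟨hρ, h⟩
    · linarith [fR x (Hl_mono h hxρ)]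
  · intro σ hσ τ hτ
    exact hT.2.2 σ (Finset.mem_filter.1 hσ).1 τ (Finset.mem_filter.1 hτ).1
  · intro σ hσ
    rw [Finset.mem_filter] at hσ
    exact ⟨hσ.2, (hT.1 σ hσ.1).2⟩
  · intro x hx
    have hp := chi_pos_of_interior nkj gR hx
    have hx' := hT.2.1 (interior_mono (Hl_mono hIR) hx)
    simp only [Set.mem_iUnion] at hx' ⊢
    obtain ⟨ρ, hρ, hxρ⟩ := hx'
    refine ⟨ρ, ?_, hxρ⟩
    rcases h1 ρ hρ with rfl | h | h
    · linarith [gM x hxρ]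
    · linarith [gL x (Hl_mono h hxρ)]
    · exact Finset.mem_filter.2 ⟨hρ, h⟩
  · intro σ hσ τ hτ
    exact hT.2.2 σ (Finset.mem_filter.1 hσ).1 τ (Finset.mem_filter.1 hτ).1
  · ext ρ
    simp only [Finset.mem_union, Finset.mem_filter]
    constructor
    · intro hρ
      rcases h1 ρ hρ with h | h | h
      · left; left
        rw [mem_midTri]
        refine ⟨h, (NI_triple hik.ne hij.ne hkj.ne).1 ?_⟩
        rw [← h]; exact (hT.1 ρ hρ).2.2
      · exact Or.inl (Or.inr ⟨hρ, h⟩)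
      · exact Or.inr ⟨hρ, h⟩
    · rintro ((h | h) | h)
      · exact h2 h
      · exact h.1
      · exact h.1

/-- The triangle at the base. -/
lemma Good.base {v : Fin m → ℝ × ℝ} (G : Good v) {i j : Fin m} (hij : i < j)
    {T : Finset (Finset (Fin m))} (hT : TriOn v (Finset.Icc i j) T)
    (hne : (interior (Hl v (Finset.Icc i j))).Nonempty) :
    ∃ a b, {a, b, j} ∈ T ∧ a < b ∧ b < j ∧ (i = a ∨ (i < a ∧ chi (v i) (v a) (v j) = 0)) := by
  classical
  set S := (Finset.Ioo i j).filter (fun l => 0 < chi (v i) (v l) (v j)) with hS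
  set U : Set (ℝ × ℝ) := ⋂ l ∈ S, {x | chi (v i) x (v l) < 0 ∧ chi (v l) x (v j) < 0} with hU
  have hUo : IsOpen U := by
    apply isOpen_biInter_finset
    intro l _
    exact (isOpen_lt (chi_continuous _ _) continuous_const).inter
      (isOpen_lt (chi_continuous _ _) continuous_const)
  set md : ℝ × ℝ := (1/2 : ℝ) • v i + (1/2 : ℝ) • v j with hmd
  have hmU : md ∈ U := by
    simp only [hU, Set.mem_iInter]
    intro l hl
    have hl' := (Finset.mem_filter.1 hl).2
    constructor
    · rw [hmd, chi_combo _ _ _ _ _ _ (by norm_num), chi_left, chi_swap]; linarith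
    · rw [hmd, chi_combo _ _ _ _ _ _ (by norm_num), chi_right, chi_swap']; linarith
  have hmH : md ∈ Hl v (Finset.Icc i j) :=
    (Hl_convex v _) (vert_mem_Hl (Finset.left_mem_Icc.2 hij.le))
      (vert_mem_Hl (Finset.right_mem_Icc.2 hij.le)) (by norm_num) (by norm_num) (by norm_num)
  have hmc : md ∈ closure (interior (Hl v (Finset.Icc i j))) := by
    rw [(Hl_convex v _).closure_interior_eq_closure_of_nonempty_interior hne]
    exact subset_closure hmH
  obtain ⟨x, hxU, hxi⟩ := mem_closure_iff.1 hmc U hUo hmU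
  have hx' := hT.2.1 hxi
  simp only [Set.mem_iUnion] at hx'
  obtain ⟨τ, hτ, hxτ⟩ := hx'
  obtain ⟨hsub, hcard, hN⟩ := hT.1 τ hτ
  obtain ⟨a, b, c, hab, hbc, rfl⟩ := exists_sorted_triple hcard
  have ha := Finset.mem_Icc.1 (hsub (by simp : a ∈ _))
  have hc := Finset.mem_Icc.1 (hsub (by simp : c ∈ _))
  simp only [hU, Set.mem_iInter] at hxU
  have hcj : c = j := by
    by_contra hcj
    have hcj : c < j := lt_of_le_of_ne hc.2 hcj
    have hib : i < b := lt_of_le_of_lt ha.1 hab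
    have h2 := G.g2 i b c j hib hbc hcj
    have h3 := (hxU c (Finset.mem_filter.2 ⟨Finset.mem_Ioo.2 ⟨hib.trans hbc, hcj⟩, h2⟩)).1
    have h4 : 0 ≤ chi (v i) x (v c) := Hl_nonneg (fun t ht => by
      simp only [Finset.mem_insert, Finset.mem_singleton] at ht
      rcases ht with rfl | rfl | rfl
      · exact G.sgn1 ha.1 (hab.trans hbc).le
      · exact G.sgn1 hib.le hbc.le
      · rw [chi_right]) hxτ
    linarith
  subst hcj
  refine ⟨a, b, hτ, hab, hbc, ?_⟩
  rcases ha.1.eq_or_lt with h | h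
  · exact Or.inl h
  · refine Or.inr ⟨h, ?_⟩
    by_contra h0
    have hp := lt_of_le_of_ne (G.g1 i a c h (hab.trans hbc)) (Ne.symm h0)
    have h3 := (hxU a (Finset.mem_filter.2 ⟨Finset.mem_Ioo.2 ⟨h, hab.trans hbc⟩, hp⟩)).2
    have h4 : 0 ≤ chi (v a) x (v c) := Hl_nonneg (fun t ht => by
      simp only [Finset.mem_insert, Finset.mem_singleton] at ht
      rcases ht with rfl | rfl | rfl
      · rw [chi_left]
      · exact G.sgn1 hab.le hbc.le
      · rw [chi_right]) hxτ
    linarith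

lemma Good.decomp {v : Fin m → ℝ × ℝ} (G : Good v) {i j : Fin m}
    {T : Finset (Finset (Fin m))} (hT : TriOn v (Finset.Icc i j) T)
    (hIoo : (Finset.Ioo i j).Nonempty) :
    ∃ k ∈ Finset.Ioo i j, ∃ L R, TriOn v (Finset.Icc i k) L ∧ TriOn v (Finset.Icc k j) R ∧
      T = midTri v i k j ∪ L ∪ R := by
  obtain ⟨k0, hk0⟩ := hIoo
  have hk0' := Finset.mem_Ioo.1 hk0
  have hij := hk0'.1.trans hk0'.2
  by_cases hne : (interior (Hl v (Finset.Icc i j))).Nonempty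
  · obtain ⟨a, b, hτ, hab, hbj, hia⟩ := G.base hij hT hne
    obtain ⟨hsub, hcard, hN⟩ := hT.1 _ hτ
    have haj := hab.trans hbj
    rcases hia with rfl | ⟨hia, h0⟩
    · -- the base triangle
      refine ⟨b, Finset.mem_Ioo.2 ⟨hab, hbj⟩, G.split_of hab hbj hT ?_ ?_⟩
      · intro ρ hρ
        obtain ⟨hρs, hρc, hρN⟩ := hT.1 ρ hρ
        by_cases hL : ρ ⊆ Finset.Icc i b
        · exact Or.inr (Or.inl hL)
        by_cases hR : ρ ⊆ Finset.Icc b j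
        · exact Or.inr (Or.inr hR)
        left
        obtain ⟨d, hd, hdb⟩ := Finset.not_subset.1 hL
        obtain ⟨c, hc, hcb⟩ := Finset.not_subset.1 hR
        have hdI := Finset.mem_Icc.1 (hρs hd)
        have hcI := Finset.mem_Icc.1 (hρs hc)
        have hbd : b < d := by
          by_contra h; exact hdb (Finset.mem_Icc.2 ⟨hdI.1, not_lt.1 h⟩)
        have hcb : c < b := by
          by_contra h; exact hcb (Finset.mem_Icc.2 ⟨not_lt.1 h, hcI.2⟩)
        have key1 : ∀ e ∈ ρ, i < e → e < b → False := fun e he h1 h2 =>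
          G.no_cross hρc hcard hρN hN (hT.2.2 _ hρ _ hτ) h1 h2 hbd (by simp) (by simp) he hd
        have hci : c = i := by
          by_contra h
          exact key1 c hc (lt_of_le_of_ne hcI.1 (Ne.symm h)) hcb
        subst hci
        have key2 : ∀ e ∈ ρ, b < e → e < j → False := fun e he h1 h2 =>
          G.no_cross hcard hρc hN hρN (hT.2.2 _ hτ _ hρ) hcb h1 h2 hc he (by simp) (by simp)
        apply Finset.eq_of_subset_of_card_le
        · intro e he
          have heI := Finset.mem_Icc.1 (hρs he)
          simp only [Finset.mem_insert, Finset.mem_singleton]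
          rcases lt_trichotomy e b with h | h | h
          · left; by_contra h'; exact key1 e he (lt_of_le_of_ne heI.1 (Ne.symm h')) h
          · exact Or.inr (Or.inl h)
          · right; right; by_contra h'; exact key2 e he h (lt_of_le_of_ne heI.2 h')
        · rw [hρc, hcard]
      · intro σ hσ
        rw [mem_midTri] at hσ
        rw [hσ.1]; exact hτ
    · refine ⟨a, Finset.mem_Ioo.2 ⟨hia, haj⟩, G.split_of hia haj hT ?_ ?_⟩
      · intro ρ hρ
        obtain ⟨hρs, hρc, hρN⟩ := hT.1 ρ hρ
        right; right
        have hpos : 0 < chi (v a) (v b) (v j) := lt_of_le_of_ne (G.g1 a b j hab hbj)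
          (Ne.symm ((NI_triple hab.ne haj.ne hbj.ne).1 hN))
        have hrel := chi_rel (v i) (v a) (v b) (v j)
        have hsum := chi_sum (v i) (v a) (v b) (v j)
        rw [h0] at hrel hsum
        have hvi : v i ∈ Hl v {a, b, j} := by
          have : v i = (chi (v i) (v b) (v j) / chi (v a) (v b) (v j)) • v a +
              (chi (v i) (v a) (v b) / chi (v a) (v b) (v j)) • v j := by
            rw [zero_smul, add_zero] at hrel
            rw [div_eq_inv_mul, div_eq_inv_mul, mul_smul, mul_smul, ← smul_add, ← hrel,
              smul_smul, inv_mul_cancel₀ hpos.ne', one_smul]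
          rw [this]
          refine (Hl_convex v _) (vert_mem_Hl (by simp)) (vert_mem_Hl (by simp))
            (div_nonneg (G.g1 i b j (hia.trans hab) hbj) hpos.le)
            (div_nonneg (G.g1 i a b hia hab) hpos.le) ?_
          rw [← add_div, div_eq_one_iff_eq hpos.ne']
          linarith
        intro e he
        have heI := Finset.mem_Icc.1 (hρs he)
        refine Finset.mem_Icc.2 ⟨?_, heI.2⟩
        by_contra hea
        push Not at hea
        rcases heI.1.eq_or_lt with h | h
        · subst h
          have := G.mem_of_compat hρc hcard hρN (hT.2.2 _ hρ _ hτ) he hvi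
          simp only [Finset.mem_insert, Finset.mem_singleton] at this
          rcases this with h | h | h
          · exact hia.ne h
          · exact (hia.trans hab).ne h
          · exact hij.ne h
        · have := G.g2 i e a j h hea haj
          linarith
      · intro σ hσ
        rw [mem_midTri] at hσ
        exact absurd h0 hσ.2
  · have hTe : ∀ ρ, ρ ⊆ Finset.Icc i j → ρ.card = 3 → NI v ρ → False := by
      intro ρ h1 h2 h3
      exact hne ((h3.interior_nonempty h2).mono (interior_mono (Hl_mono h1)))
    refine ⟨k0, hk0, G.split_of hk0'.1 hk0'.2 hT ?_ ?_⟩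
    · intro ρ hρ
      exact (hTe ρ (hT.1 ρ hρ).1 (hT.1 ρ hρ).2.1 (hT.1 ρ hρ).2.2).elim
    · intro σ hσ
      rw [mem_midTri] at hσ
      exfalso
      refine hTe {i, k0, j} ?_ (Finset.card_eq_three.2 ⟨i, k0, j, hk0'.1.ne, hij.ne, hk0'.2.ne, rfl⟩)
        ((NI_triple hk0'.1.ne hij.ne hk0'.2.ne).2 hσ.2)
      intro y hy
      simp only [Finset.mem_insert, Finset.mem_singleton] at hy
      rw [Finset.mem_Icc]
      rcases hy with rfl | rfl | rfl
      · exact ⟨le_rfl, hij.le⟩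
      · exact ⟨hk0'.1.le, hk0'.2.le⟩
      · exact ⟨hij.le, le_rfl⟩

end


section
variable {m : ℕ}
open Classical in
/-- The finite set of triangulations of the subconfiguration `[i, j]`. -/
noncomputable def Tris (v : Fin m → ℝ × ℝ) (i j : Fin m) : Finset (Finset (Finset (Fin m))) :=
  Finset.univ.filter (TriOn v (Finset.Icc i j))

lemma mem_Tris {v : Fin m → ℝ × ℝ} {i j : Fin m} {T : Finset (Finset (Fin m))} :
    T ∈ Tris v i j ↔ TriOn v (Finset.Icc i j) T := by
  classical
  unfold Tris; simp

lemma Tris_base {v : Fin m → ℝ × ℝ} (G : Good v) {i j : Fin m} (hij : i < j)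
    (h : Finset.Ioo i j = ∅) : Tris v i j = {∅} := by
  have hI : Finset.Icc i j ⊆ {i, j} := by
    intro x hx
    have := Finset.mem_Icc.1 hx
    simp only [Finset.mem_insert, Finset.mem_singleton]
    by_contra hc
    push Not at hc
    have : x ∈ Finset.Ioo i j := Finset.mem_Ioo.2
      ⟨lt_of_le_of_ne this.1 (Ne.symm hc.1), lt_of_le_of_ne this.2 hc.2⟩
    rw [h] at this
    simp at this
  ext T
  rw [mem_Tris, Finset.mem_singleton]
  constructor
  · intro hT
    rw [Finset.eq_empty_iff_forall_notMem]
    intro σ hσ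
    have h1 := Finset.card_le_card ((hT.1 σ hσ).1.trans hI)
    have h2 := Finset.card_le_two (a := i) (b := j)
    have h3 := (hT.1 σ hσ).2.1
    omega
  · rintro rfl
    refine ⟨by simp, ?_, by simp⟩
    intro x hx
    exfalso
    have f : ∀ a ∈ Finset.Icc i j, chi (v i) (v a) (v j) = 0 := by
      intro a ha
      have := hI ha
      simp only [Finset.mem_insert, Finset.mem_singleton] at this
      rcases this with rfl | rfl
      · rw [chi_left]
      · rw [chi_right]
    have h1 := chi_pos_of_interior (fun h => hij.ne (G.inj h))
      (fun y hy => Hl_nonneg (fun a ha => (f a ha).ge) hy) hx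
    have h2 := Hl_nonpos (fun a ha => (f a ha).le) (interior_subset hx)
    linarith

/-- the pieces of a glued triangulation are determined -/
lemma glue_left {v : Fin m → ℝ × ℝ} {i k j : Fin m} (hkj : k < j)
    {L R : Finset (Finset (Fin m))} (hL : TriOn v (Finset.Icc i k) L)
    (hR : TriOn v (Finset.Icc k j) R) :
    (midTri v i k j ∪ L ∪ R).filter (· ⊆ Finset.Icc i k) = L := by
  ext σ
  simp only [Finset.mem_filter, Finset.mem_union, mem_midTri]
  constructor
  · rintro ⟨(⟨rfl, _⟩ | h) | h, hs⟩
    · have := Finset.mem_Icc.1 (hs (by simp : j ∈ _))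
      exact absurd this.2 (not_le.2 hkj)
    · exact h
    · have h1 : σ ⊆ {k} := by
        intro x hx
        have a := Finset.mem_Icc.1 (hs hx)
        have b := Finset.mem_Icc.1 ((hR.1 σ h).1 hx)
        rw [Finset.mem_singleton]
        exact le_antisymm a.2 b.1
      have h2 := Finset.card_le_card h1
      rw [(hR.1 σ h).2.1, Finset.card_singleton] at h2
      omega
  · intro h
    exact ⟨Or.inl (Or.inr h), (hL.1 σ h).1⟩

lemma glue_right {v : Fin m → ℝ × ℝ} {i k j : Fin m} (hik : i < k)
    {L R : Finset (Finset (Fin m))} (hL : TriOn v (Finset.Icc i k) L)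
    (hR : TriOn v (Finset.Icc k j) R) :
    (midTri v i k j ∪ L ∪ R).filter (· ⊆ Finset.Icc k j) = R := by
  ext σ
  simp only [Finset.mem_filter, Finset.mem_union, mem_midTri]
  constructor
  · rintro ⟨(⟨rfl, _⟩ | h) | h, hs⟩
    · have := Finset.mem_Icc.1 (hs (by simp : i ∈ _))
      exact absurd this.1 (not_le.2 hik)
    · have h1 : σ ⊆ {k} := by
        intro x hx
        have a := Finset.mem_Icc.1 (hs hx)
        have b := Finset.mem_Icc.1 ((hL.1 σ h).1 hx)
        rw [Finset.mem_singleton]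
        exact le_antisymm b.2 a.1
      have h2 := Finset.card_le_card h1
      rw [(hL.1 σ h).2.1, Finset.card_singleton] at h2
      omega
    · exact h
  · intro h
    exact ⟨Or.inr h, (hR.1 σ h).1⟩

lemma glue_mid {v : Fin m → ℝ × ℝ} {i k k' j : Fin m} (hik : i < k) (hkj : k < j)
    (hk'j : k' < j)
    {L R : Finset (Finset (Fin m))} (hL : TriOn v (Finset.Icc i k) L)
    (hR : TriOn v (Finset.Icc k j) R) (hik' : i < k')
    (h : {i, k', j} ∈ midTri v i k j ∪ L ∪ R) : k' = k := by
  simp only [Finset.mem_union, mem_midTri] at h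
  rcases h with (⟨h, _⟩ | h) | h
  · have : k' ∈ ({i, k, j} : Finset (Fin m)) := by rw [← h]; simp
    simp only [Finset.mem_insert, Finset.mem_singleton] at this
    rcases this with h | h | h
    · exact absurd h hik'.ne'
    · exact h
    · exact absurd h hk'j.ne
  · have := Finset.mem_Icc.1 ((hL.1 _ h).1 (by simp : j ∈ _))
    exact absurd this.2 (not_le.2 hkj)
  · have := Finset.mem_Icc.1 ((hR.1 _ h).1 (by simp : i ∈ _))
    exact absurd this.1 (not_le.2 hik)

lemma glue_unique {v : Fin m → ℝ × ℝ} (G : Good v) {i k k' j : Fin m} (hik : i < k) (hkj : k < j)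
    (hik' : i < k') (hk'j : k' < j)
    {L R L' R' : Finset (Finset (Fin m))} (hL : TriOn v (Finset.Icc i k) L)
    (hR : TriOn v (Finset.Icc k j) R) (hL' : TriOn v (Finset.Icc i k') L')
    (hR' : TriOn v (Finset.Icc k' j) R')
    (h : midTri v i k j ∪ L ∪ R = midTri v i k' j ∪ L' ∪ R') : k = k' := by
  by_cases h1 : chi (v i) (v k) (v j) = 0
  · by_cases h2 : chi (v i) (v k') (v j) = 0
    · rcases lt_trichotomy k k' with hl | hl | hl
      · have := G.g2 i k k' j hik hl hk'j; linarith
      · exact hl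
      · have := G.g2 i k' k j hik' hl hkj; linarith
    · refine (glue_mid hik hkj hk'j hL hR hik' ?_).symm
      rw [h]; simp [mem_midTri, h2]
  · refine glue_mid hik' hk'j hkj hL' hR' hik ?_
    rw [← h]; simp [mem_midTri, h1]

lemma Tris_rec {v : Fin m → ℝ × ℝ} (G : Good v) {i j : Fin m}
    (h : (Finset.Ioo i j).Nonempty) :
    (Tris v i j).card = ∑ k ∈ Finset.Ioo i j, (Tris v i k).card * (Tris v k j).card := by
  classical
  have e : Tris v i j = (Finset.Ioo i j).biUnion fun k =>
      (Tris v i k ×ˢ Tris v k j).image fun P => midTri v i k j ∪ P.1 ∪ P.2 := by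
    ext T
    simp only [Finset.mem_biUnion, Finset.mem_image, Finset.mem_product, mem_Tris, Prod.exists]
    constructor
    · intro hT
      obtain ⟨k, hk, L, R, hL, hR, rfl⟩ := G.decomp hT h
      exact ⟨k, hk, L, R, ⟨hL, hR⟩, rfl⟩
    · rintro ⟨k, hk, L, R, ⟨hL, hR⟩, rfl⟩
      have hk := Finset.mem_Ioo.1 hk
      exact G.glue hk.1 hk.2 hL hR
  rw [e, Finset.card_biUnion]
  · refine Finset.sum_congr rfl fun k hk => ?_
    have hk := Finset.mem_Ioo.1 hk
    rw [Finset.card_image_of_injOn, Finset.card_product]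
    rintro ⟨L, R⟩ hLR ⟨L', R'⟩ hLR' heq
    simp only [Finset.coe_product, Set.mem_prod, Finset.mem_coe, mem_Tris] at hLR hLR'
    have heq : midTri v i k j ∪ L ∪ R = midTri v i k j ∪ L' ∪ R' := heq
    have h1 := glue_left hk.2 hLR.1 hLR.2
    have h2 := glue_right hk.1 hLR.1 hLR.2
    rw [heq, glue_left hk.2 hLR'.1 hLR'.2] at h1
    rw [heq, glue_right hk.1 hLR'.1 hLR'.2] at h2
    rw [h1, h2]
  · intro k hk k' hk' hne
    show Disjoint _ _
    rw [Finset.disjoint_left]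
    intro T hT hT'
    simp only [Finset.mem_image, Finset.mem_product, mem_Tris, Prod.exists] at hT hT'
    obtain ⟨L, R, ⟨hL, hR⟩, rfl⟩ := hT
    obtain ⟨L', R', ⟨hL', hR'⟩, he⟩ := hT'
    have hk := Finset.mem_Ioo.1 hk
    have hk' := Finset.mem_Ioo.1 hk'
    exact hne (glue_unique G hk.1 hk.2 hk'.1 hk'.2 hL hR hL' hR' he.symm)

theorem Tris_card_eq {v u : Fin m → ℝ × ℝ} (G : Good v) (G' : Good u) :
    ∀ (N : ℕ) (i j : Fin m), i < j → j.val - i.val ≤ N →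
      (Tris v i j).card = (Tris u i j).card := by
  intro N
  induction N with
  | zero => intro i j hij h; have : i.val < j.val := hij; omega
  | succ N ih =>
    intro i j hij h
    rcases (Finset.Ioo i j).eq_empty_or_nonempty with h0 | h0
    · rw [Tris_base G hij h0, Tris_base G' hij h0]
    · rw [Tris_rec G h0, Tris_rec G' h0]
      refine Finset.sum_congr rfl fun k hk => ?_
      have hk := Finset.mem_Ioo.1 hk
      have h1 : i.val < k.val := hk.1
      have h2 : k.val < j.val := hk.2
      rw [ih i k hk.1 (by omega), ih k j hk.2 (by omega)]

/-- Top level. -/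
lemma isTriangulation_iff {n : ℕ} {v : Fin (n + 3) → ℝ × ℝ}
    (hne : (interior (convexHull ℝ (Set.range v))).Nonempty) (T : Finset (Finset (Fin (n + 3)))) :
    IsTriangulation v T ↔ TriOn v (Finset.Icc 0 (Fin.last _)) T := by
  have hA : (Finset.Icc 0 (Fin.last (n + 2)) : Finset (Fin (n + 3))) = Finset.univ := by
    ext x; simp [Fin.le_last]
  have hH : Hl v Finset.univ = convexHull ℝ (Set.range v) := by simp [Hl]
  rw [hA]
  unfold IsTriangulation TriOn
  rw [hH]
  constructor
  · rintro ⟨h1, h2, h3⟩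
    refine ⟨fun σ hσ => ⟨Finset.subset_univ _, h1 σ hσ⟩, ?_, h3⟩
    exact interior_subset.trans h2.ge
  · rintro ⟨h1, h2, h3⟩
    refine ⟨fun σ hσ => (h1 σ hσ).2, ?_, h3⟩
    apply Set.Subset.antisymm
    · refine Set.iUnion₂_subset fun σ _ => ?_
      exact convexHull_mono (Set.image_subset_range _ _)
    · have := closure_minimal h2 (isClosed_tri v T)
      rw [(convex_convexHull ℝ _).closure_interior_eq_closure_of_nonempty_interior hne] at this
      exact subset_closure.trans this

theorem equiv_of_good {n : ℕ} {v u : Fin (n + 3) → ℝ × ℝ} (G : Good v) (G' : Good u)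
    (hv : (interior (convexHull ℝ (Set.range v))).Nonempty)
    (hu : (interior (convexHull ℝ (Set.range u))).Nonempty) :
    Nonempty ({T // IsTriangulation v T} ≃ {T // IsTriangulation u T}) := by
  have h := Tris_card_eq G G' (n + 3) 0 (Fin.last (n + 2)) (Fin.last_pos) (by simp)
  have ev : {T // IsTriangulation v T} ≃ {T // T ∈ Tris v 0 (Fin.last (n + 2))} :=
    Equiv.subtypeEquivRight fun T => by rw [mem_Tris, isTriangulation_iff hv]
  have eu : {T // IsTriangulation u T} ≃ {T // T ∈ Tris u 0 (Fin.last (n + 2))} :=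
    Equiv.subtypeEquivRight fun T => by rw [mem_Tris, isTriangulation_iff hu]
  exact ⟨ev.trans ((Finset.equivOfCardEq h).trans eu.symm)⟩

/-- Relabelling the points. -/
lemma isTriangulation_reindex {m : ℕ} {v : Fin m → ℝ × ℝ} (π : Equiv.Perm (Fin m))
    {T : Finset (Finset (Fin m))} (h : IsTriangulation (v ∘ π) T) :
    IsTriangulation v (T.map (Equiv.finsetCongr π).toEmbedding) := by
  have himg : ∀ σ : Finset (Fin m), v '' ↑(Equiv.finsetCongr π σ) = (v ∘ π) '' ↑σ := by
    intro σ; simp [Equiv.finsetCongr, Set.image_image]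
  obtain ⟨h1, h2, h3⟩ := h
  refine ⟨?_, ?_, ?_⟩
  · intro σ hσ
    obtain ⟨τ, hτ, rfl⟩ := Finset.mem_map.1 hσ
    refine ⟨by simpa using (h1 τ hτ).1, ?_⟩
    let e : {x // x ∈ τ} ≃ {x // x ∈ Equiv.finsetCongr π τ} :=
      π.subtypeEquiv fun a => by simp [Equiv.finsetCongr]
    have := (affineIndependent_equiv (k := ℝ) e
      (p := fun i : {x // x ∈ Equiv.finsetCongr π τ} => v i.1)).1 (h1 τ hτ).2
    exact this
  · rw [← Function.Surjective.range_comp π.surjective v, ← h2]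
    ext x
    simp only [Set.mem_iUnion, Finset.mem_map, exists_prop]
    constructor
    · rintro ⟨_, ⟨τ, hτ, rfl⟩, hx⟩
      refine ⟨τ, hτ, ?_⟩
      rw [← himg]; exact hx
    · rintro ⟨τ, hτ, hx⟩
      refine ⟨_, ⟨τ, hτ, rfl⟩, ?_⟩
      rw [← himg] at hx; exact hx
  · intro σ hσ τ hτ
    obtain ⟨σ, hσ', rfl⟩ := Finset.mem_map.1 hσ
    obtain ⟨τ, hτ', rfl⟩ := Finset.mem_map.1 hτ
    have := h3 σ hσ' τ hτ'
    rw [← himg, ← himg] at this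
    exact this

lemma reindex_equiv {m : ℕ} (v : Fin m → ℝ × ℝ) (π : Equiv.Perm (Fin m)) :
    Nonempty ({T // IsTriangulation (v ∘ π) T} ≃ {T // IsTriangulation v T}) := by
  refine ⟨Equiv.subtypeEquiv (Equiv.finsetCongr (Equiv.finsetCongr π)) fun T => ⟨?_, ?_⟩⟩
  · intro h
    exact isTriangulation_reindex π h
  · intro h
    have := isTriangulation_reindex (v := v ∘ π) π.symm
      (T := (Equiv.finsetCongr (Equiv.finsetCongr π)) T)
      (by rw [Function.comp_assoc]; simpa using h)
    convert this
    ext σ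
    simp [Equiv.finsetCongr, Finset.map_map]

end


section
variable {m : ℕ}

/-- Weakly convex configurations. -/
structure WC (v : Fin m → ℝ × ℝ) : Prop where
  inj : Function.Injective v
  int : (interior (convexHull ℝ (Set.range v))).Nonempty
  pos : ∀ i, v i ∈ Set.extremePoints ℝ (convexHull ℝ (Set.range v)) ∨
      ∃ x y : ℝ × ℝ, x ≠ y ∧
        IsExtreme ℝ (convexHull ℝ (Set.range v)) (segment ℝ x y) ∧
        v i ∈ openSegment ℝ x y
  once : ∀ x y : ℝ × ℝ, x ≠ y →
      IsExtreme ℝ (convexHull ℝ (Set.range v)) (segment ℝ x y) →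
      (Set.range v ∩ openSegment ℝ x y).Subsingleton

lemma chi_segment {x y a b c : ℝ × ℝ} (ha : a ∈ segment ℝ x y) (hb : b ∈ segment ℝ x y)
    (hc : c ∈ segment ℝ x y) : chi a b c = 0 := by
  obtain ⟨s1, t1, _, _, h1, rfl⟩ := ha
  obtain ⟨s2, t2, _, _, h2, rfl⟩ := hb
  obtain ⟨s3, t3, _, _, h3, rfl⟩ := hc
  obtain rfl : s1 = 1 - t1 := by linarith
  obtain rfl : s2 = 1 - t2 := by linarith
  obtain rfl : s3 = 1 - t3 := by linarith
  unfold chi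
  simp
  ring

lemma WC.mem {v : Fin m → ℝ × ℝ} (i : Fin m) : v i ∈ convexHull ℝ (Set.range v) :=
  subset_convexHull ℝ _ ⟨i, rfl⟩

lemma WC.seg {v : Fin m → ℝ × ℝ} (W : WC v) (j : Fin m) : ∃ x y : ℝ × ℝ,
    IsExtreme ℝ (convexHull ℝ (Set.range v)) (segment ℝ x y) ∧ v j ∈ segment ℝ x y := by
  rcases W.pos j with h | ⟨x, y, _, h1, h2⟩
  · refine ⟨v j, v j, ?_, left_mem_segment _ _ _⟩
    rw [segment_same]
    exact isExtreme_singleton.2 h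
  · exact ⟨x, y, h1, openSegment_subset_segment _ _ _ h2⟩

lemma WC.F1 {v : Fin m → ℝ × ℝ} (W : WC v) {j a b c : Fin m} {r s t : ℝ} (hr : 0 < r)
    (hs : 0 < s) (ht : 0 < t) (h1 : r + s + t = 1) (h : v j = r • v a + s • v b + t • v c) :
    chi (v a) (v b) (v c) = 0 := by
  obtain ⟨x, y, hS, hj⟩ := W.seg j
  have hst : 0 < s + t := by linarith
  set z : ℝ × ℝ := (s / (s + t)) • v b + (t / (s + t)) • v c with hz
  have hzo : z ∈ openSegment ℝ (v b) (v c) :=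
    ⟨s / (s + t), t / (s + t), div_pos hs hst, div_pos ht hst,
      by rw [← add_div, div_self hst.ne'], rfl⟩
  have hzH : z ∈ convexHull ℝ (Set.range v) :=
    (convex_convexHull ℝ _).segment_subset (WC.mem b) (WC.mem c)
      (openSegment_subset_segment _ _ _ hzo)
  have hjo : v j ∈ openSegment ℝ (v a) z := by
    refine ⟨r, s + t, hr, hst, by linarith, ?_⟩
    rw [h, hz, smul_add, smul_smul, smul_smul, mul_div_cancel₀ _ hst.ne',
      mul_div_cancel₀ _ hst.ne', add_assoc]
  obtain ⟨haS, hzS⟩ := hS.left_right (WC.mem a) hzH hj hjo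
  obtain ⟨hbS, hcS⟩ := hS.left_right (WC.mem b) (WC.mem c) hzS hzo
  exact chi_segment haS hbS hcS

lemma open_ne_left {x y z : ℝ × ℝ} (h : x ∈ openSegment ℝ y z) (hyz : y ≠ z) : x ≠ y := by
  rintro rfl
  exact hyz (left_mem_openSegment_iff.1 h)

lemma mem_ends {x y z : ℝ × ℝ} (h : z ∈ segment ℝ x y) (h' : z ∉ openSegment ℝ x y) :
    z = x ∨ z = y := by
  rw [← insert_endpoints_openSegment] at h
  simp only [Set.mem_insert_iff] at h
  rcases h with h | h | h
  · exact Or.inl h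
  · exact Or.inr h
  · exact absurd h h'

lemma WC.F2 {v : Fin m → ℝ × ℝ} (W : WC v) {j i k : Fin m} (hik : i ≠ k)
    (h : v j ∈ openSegment ℝ (v i) (v k)) :
    IsExtreme ℝ (convexHull ℝ (Set.range v)) (segment ℝ (v i) (v k)) := by
  have hne : v i ≠ v k := fun h => hik (W.inj h)
  have hji : v j ≠ v i := open_ne_left h hne
  have hjk : v j ≠ v k := open_ne_left (by rwa [openSegment_symm]) hne.symm
  rcases W.pos j with he | ⟨x, y, hxy, hS, hj⟩
  · exact absurd (he.2 (WC.mem i) (WC.mem k) h).symm hji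
  · have hjS := openSegment_subset_segment _ _ _ hj
    obtain ⟨hi, hk⟩ := hS.left_right (WC.mem i) (WC.mem k) hjS h
    have hi' : v i ∉ openSegment ℝ x y := fun hh =>
      hji (W.once x y hxy hS ⟨⟨j, rfl⟩, hj⟩ ⟨⟨i, rfl⟩, hh⟩)
    have hk' : v k ∉ openSegment ℝ x y := fun hh =>
      hjk (W.once x y hxy hS ⟨⟨j, rfl⟩, hj⟩ ⟨⟨k, rfl⟩, hh⟩)
    rcases mem_ends hi hi' with h1 | h1 <;> rcases mem_ends hk hk' with h2 | h2
    · exact absurd (h1.trans h2.symm) hne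
    · rw [h1, h2]; exact hS
    · rw [h1, h2, segment_symm]; exact hS
    · exact absurd (h1.trans h2.symm) hne

lemma WC.F2' {v : Fin m → ℝ × ℝ} (W : WC v) {j l i k : Fin m} (hik : i ≠ k)
    (h : v j ∈ openSegment ℝ (v i) (v k)) (h' : v l ∈ openSegment ℝ (v i) (v k)) : j = l :=
  W.inj (W.once _ _ (fun h => hik (W.inj h)) (W.F2 hik h) ⟨⟨j, rfl⟩, h⟩ ⟨⟨l, rfl⟩, h'⟩)

lemma WC.g4 {v : Fin m → ℝ × ℝ} (W : WC v) (a b c d e : Fin m)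
    (h : v a ∈ openSegment ℝ (v b) (v c)) (hbc : b ≠ c)
    (h' : v b ∈ openSegment ℝ (v d) (v e)) (hde : d ≠ e) : False := by
  have hS := W.F2 hbc h
  obtain ⟨hd, he⟩ := hS.left_right (WC.mem d) (WC.mem e) (left_mem_segment _ _ _) h'
  have hne : v b ≠ v c := fun h => hbc (W.inj h)
  obtain ⟨s1, t1, hs1, ht1, h1, hd⟩ := hd
  obtain ⟨s2, t2, hs2, ht2, h2, he⟩ := he
  obtain ⟨r, s, hr, hs, hrs, hb⟩ := h'
  have hz : (r * t1 + s * t2) • (v c - v b) = 0 := by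
    have e1 : v d = v b + t1 • (v c - v b) := by
      rw [← hd]; obtain rfl : s1 = 1 - t1 := by linarith
      module
    have e2 : v e = v b + t2 • (v c - v b) := by
      rw [← he]; obtain rfl : s2 = 1 - t2 := by linarith
      module
    obtain rfl : r = 1 - s := by linarith
    rw [e1, e2] at hb
    have : ((1 - s) * t1 + s * t2) • (v c - v b) = ((1 - s) • (v b + t1 • (v c - v b)) +
      s • (v b + t2 • (v c - v b))) - v b := by module
    rw [this, hb, sub_self]
  rcases smul_eq_zero.1 hz with h0 | h0
  · have a1 := mul_nonneg hr.le ht1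
    have a2 := mul_nonneg hs.le ht2
    have b1 : t1 = 0 := by
      have : r * t1 = 0 := by linarith
      exact (mul_eq_zero.1 this).resolve_left hr.ne'
    have b2 : t2 = 0 := by
      have : s * t2 = 0 := by linarith
      exact (mul_eq_zero.1 this).resolve_left hs.ne'
    subst b1; subst b2
    obtain rfl : s1 = 1 := by linarith
    obtain rfl : s2 = 1 := by linarith
    exact hde (W.inj (hd.symm.trans he))
  · exact hne (sub_eq_zero.1 h0).symm

lemma WC.not_interior {v : Fin m → ℝ × ℝ} (W : WC v) (j : Fin m) :
    v j ∉ interior (convexHull ℝ (Set.range v)) := by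
  intro hj
  obtain ⟨x, y, hS, hjS⟩ := W.seg j
  have hsub : convexHull ℝ (Set.range v) ⊆ segment ℝ x y := by
    intro h hh
    by_cases hjh : v j = h
    · rw [← hjh]; exact hjS
    have hc : Continuous fun t : ℝ => v j + t • (v j - h) := by fun_prop
    have hmem : ∀ᶠ t : ℝ in nhds 0, v j + t • (v j - h) ∈ interior (convexHull ℝ (Set.range v)) :=
      hc.continuousAt.eventually_mem (by simpa using isOpen_interior.mem_nhds hj)
    have hmem' : ∀ᶠ t : ℝ in nhdsWithin 0 (Set.Ioi 0),
        v j + t • (v j - h) ∈ interior (convexHull ℝ (Set.range v)) :=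
      hmem.filter_mono nhdsWithin_le_nhds
    obtain ⟨t, ht, htpos⟩ := (hmem'.and self_mem_nhdsWithin).exists
    have htpos : 0 < t := htpos
    refine (hS.left_right hh (interior_subset ht) hjS ?_).1
    refine ⟨t / (1 + t), 1 / (1 + t), by positivity, by positivity, by field_simp; ring, ?_⟩
    have h1 : (1 + t) ≠ 0 := by positivity
    have : (1 + t)⁻¹ • ((1 + t) • v j) = v j := by
      rw [smul_smul, inv_mul_cancel₀ h1, one_smul]
    rw [← this, div_eq_inv_mul, div_eq_inv_mul, mul_smul, mul_smul, ← smul_add]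
    congr 1
    rw [this]
    module
  by_cases hxy : x = y
  · subst hxy
    rw [segment_same] at hsub
    have := interior_mono hsub hj
    rw [interior_singleton] at this
    exact this
  · have hj' := interior_mono hsub hj
    have h0 : ∀ z ∈ segment ℝ x y, chi x z y = 0 := fun z hz =>
      chi_segment (left_mem_segment _ _ _) hz (right_mem_segment _ _ _)
    have := chi_pos_of_interior hxy (fun z hz => (h0 z hz).ge) hj'
    linarith [h0 _ hjS]

/-- Supporting functional at a point of the configuration. -/
lemma WC.support {v : Fin m → ℝ × ℝ} (W : WC v) (a : Fin m) :
    ∃ α β : ℝ, 0 < α ^ 2 + β ^ 2 ∧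
      ∀ j, 0 ≤ α * ((v j).1 - (v a).1) + β * ((v j).2 - (v a).2) := by
  obtain ⟨f, hf⟩ := geometric_hahn_banach_open_point
    ((convex_convexHull ℝ (Set.range v)).interior) isOpen_interior (W.not_interior a)
  have hfz : ∀ z : ℝ × ℝ, f z = z.1 * f (1, 0) + z.2 * f (0, 1) := by
    intro z
    have : z = z.1 • ((1 : ℝ), (0 : ℝ)) + z.2 • ((0 : ℝ), (1 : ℝ)) := by ext <;> simp
    conv_lhs => rw [this]
    rw [map_add, map_smul, map_smul, smul_eq_mul, smul_eq_mul]
  have hle : ∀ z ∈ convexHull ℝ (Set.range v), f z ≤ f (v a) := by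
    have hcl : closure (interior (convexHull ℝ (Set.range v))) ⊆ {z | f z ≤ f (v a)} :=
      closure_minimal (fun z hz => (hf z hz).le) (isClosed_le f.continuous continuous_const)
    rw [(convex_convexHull ℝ _).closure_interior_eq_closure_of_nonempty_interior W.int] at hcl
    exact fun z hz => hcl (subset_closure hz)
  refine ⟨-f (1, 0), -f (0, 1), ?_, ?_⟩
  · obtain ⟨z, hz⟩ := W.int
    have h1 := hf z hz
    rw [hfz z, hfz (v a)] at h1
    by_contra hcon
    have e1 : f (1, 0) = 0 := by nlinarith [sq_nonneg (f (1, 0)), sq_nonneg (f (0, 1))]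
    have e2 : f (0, 1) = 0 := by nlinarith [sq_nonneg (f (1, 0)), sq_nonneg (f (0, 1))]
    rw [e1, e2] at h1
    simp at h1
  · intro j
    have := hle _ (WC.mem j)
    rw [hfz (v j), hfz (v a)] at this
    linarith

end


section
variable {m : ℕ}

lemma key_aux {u w : ℝ} (h : u < w) (hu : |u| ≤ 1) (hw : |w| ≤ 1) :
    0 ≤ w * (1 - |u|) - u * (1 - |w|) ∧
    (w * (1 - |u|) - u * (1 - |w|) = 0 → u = -1 ∧ w = 1) := by
  rw [abs_le] at hu hw
  rcases le_total 0 u with h1 | h1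
  · have h2 : 0 ≤ w := by linarith
    rw [abs_of_nonneg h1, abs_of_nonneg h2]
    constructor
    · nlinarith
    · intro h0; exfalso; nlinarith
  · rcases le_total 0 w with h2 | h2
    · rw [abs_of_nonpos h1, abs_of_nonneg h2]
      have a1 : 0 ≤ w * (1 - -u) := mul_nonneg h2 (by linarith)
      have a2 : 0 ≤ (-u) * (1 - w) := mul_nonneg (by linarith) (by linarith)
      constructor
      · linarith
      · intro h0
        have b1 : w * (1 - -u) = 0 := by linarith
        have b2 : (-u) * (1 - w) = 0 := by linarith
        rcases mul_eq_zero.1 b1 with c1 | c1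
        · subst c1
          have : u = 0 := by linarith
          linarith
        · have : u = -1 := by linarith
          subst this
          refine ⟨rfl, by linarith⟩
    · rw [abs_of_nonpos h1, abs_of_nonpos h2]
      constructor
      · nlinarith
      · intro h0; exfalso; nlinarith

/-- An apex such that no two other points are on a common ray. -/
lemma WC.apex {v : Fin m → ℝ × ℝ} (W : WC v) (i0 : Fin m) :
    ∃ a : Fin m, ∀ j k, k ≠ a → v j ∉ openSegment ℝ (v a) (v k) := by
  by_cases h : ∃ a b c, b ≠ c ∧ v a ∈ openSegment ℝ (v b) (v c)
  · obtain ⟨a, b, c, hbc, ha⟩ := h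
    exact ⟨a, fun j k hk hj => W.g4 j a k b c hj hk.symm ha hbc⟩
  · push Not at h
    exact ⟨i0, fun j k hk => h j i0 k hk.symm⟩

lemma WC.keys {v : Fin m → ℝ × ℝ} (W : WC v) (i0 : Fin m) :
    ∃ (a : Fin m) (κ : Fin m → ℝ), Function.Injective κ ∧ (∀ j, j ≠ a → κ a < κ j) ∧
      (∀ j k, j ≠ a → κ j < κ k → 0 ≤ chi (v a) (v j) (v k)) ∧
      (∀ j k, j ≠ a → κ j < κ k → chi (v a) (v j) (v k) = 0 →
        ∀ l, l ≠ a → κ j ≤ κ l ∧ κ l ≤ κ k) := by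
  classical
  obtain ⟨a, ha⟩ := W.apex i0
  obtain ⟨α, β, hD, hg⟩ := W.support a
  set g : Fin m → ℝ := fun j => α * ((v j).1 - (v a).1) + β * ((v j).2 - (v a).2) with hgd
  set f : Fin m → ℝ := fun j => -β * ((v j).1 - (v a).1) + α * ((v j).2 - (v a).2) with hfd
  have hg : ∀ j, 0 ≤ g j := hg
  have hchi : ∀ j k, (α ^ 2 + β ^ 2) * chi (v a) (v j) (v k) = f k * g j - f j * g k := by
    intro j k; simp only [hgd, hfd]; unfold chi; ring
  have hx : ∀ j, (α ^ 2 + β ^ 2) * ((v j).1 - (v a).1) = α * g j - β * f j := by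
    intro j; simp only [hgd, hfd]; ring
  have hy : ∀ j, (α ^ 2 + β ^ 2) * ((v j).2 - (v a).2) = β * g j + α * f j := by
    intro j; simp only [hgd, hfd]; ring
  set N : Fin m → ℝ := fun j => |f j| + g j with hN
  have hNpos : ∀ j, j ≠ a → 0 < N j := by
    intro j hj
    by_contra hcon
    have h1 := abs_nonneg (f j)
    have h2 := hg j
    have h3 : |f j| + g j ≤ 0 := not_lt.1 hcon
    have h4 : f j = 0 := abs_eq_zero.1 (by linarith)
    have h5 : g j = 0 := by linarith
    have e1 := hx j
    have e2 := hy j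
    rw [h4, h5] at e1 e2
    simp only [mul_zero, sub_zero, add_zero, mul_eq_zero, hD.ne', false_or] at e1 e2
    exact hj (W.inj (Prod.ext (by linarith) (by linarith)))
  set u : Fin m → ℝ := fun j => f j / N j with hu
  have hfu : ∀ j, j ≠ a → f j = N j * u j := by
    intro j hj; simp only [hu]; rw [mul_div_cancel₀ _ (hNpos j hj).ne']
  have hgu : ∀ j, j ≠ a → g j = N j * (1 - |u j|) := by
    intro j hj
    have h1 := hNpos j hj
    have h2 : |f j| = N j * |u j| := by
      rw [hfu j hj, abs_mul, abs_of_pos h1]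
    have h3 : N j = |f j| + g j := rfl
    linarith
  have hu1 : ∀ j, j ≠ a → |u j| ≤ 1 := by
    intro j hj
    have h1 := hNpos j hj
    have h2 := hg j
    rw [hgu j hj] at h2
    have := nonneg_of_mul_nonneg_right h2 h1
    linarith
  have hinj : ∀ j k, j ≠ a → k ≠ a → u j = u k → N j < N k → False := by
    intro j k hj hk he hlt
    apply ha j k hk
    have h1 := hNpos j hj
    have h2 := hNpos k hk
    refine ⟨1 - N j / N k, N j / N k, ?_, by positivity, by ring, ?_⟩
    · rw [sub_pos, div_lt_one h2]; exact hlt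
    · have e1 := hx j
      have e2 := hy j
      have e3 := hx k
      have e4 := hy k
      rw [hfu j hj, hgu j hj, he] at e1 e2
      rw [hfu k hk, hgu k hk] at e3 e4
      have d1 : (v j).1 - (v a).1 = N j / N k * ((v k).1 - (v a).1) := by
        apply mul_left_cancel₀ hD.ne'
        have : (α ^ 2 + β ^ 2) * (N j / N k * ((v k).1 - (v a).1)) =
          N j / N k * ((α ^ 2 + β ^ 2) * ((v k).1 - (v a).1)) := by ring
        rw [this, e1, e3]
        field_simp
      have d2 : (v j).2 - (v a).2 = N j / N k * ((v k).2 - (v a).2) := by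
        apply mul_left_cancel₀ hD.ne'
        have : (α ^ 2 + β ^ 2) * (N j / N k * ((v k).2 - (v a).2)) =
          N j / N k * ((α ^ 2 + β ^ 2) * ((v k).2 - (v a).2)) := by ring
        rw [this, e2, e4]
        field_simp
      apply Prod.ext
      · simp only [Prod.fst_add, Prod.smul_fst, smul_eq_mul]; linarith
      · simp only [Prod.snd_add, Prod.smul_snd, smul_eq_mul]; linarith
  have hinj2 : ∀ j k, j ≠ a → k ≠ a → u j = u k → j = k := by
    intro j k hj hk he
    rcases lt_trichotomy (N j) (N k) with h | h | h
    · exact (hinj j k hj hk he h).elim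
    · have e1 := hx j
      have e2 := hy j
      have e3 := hx k
      have e4 := hy k
      rw [hfu j hj, hgu j hj, he, h, ← hfu k hk, ← hgu k hk] at e1 e2
      rw [← e3] at e1
      rw [← e4] at e2
      have d1 := mul_left_cancel₀ hD.ne' e1
      have d2 := mul_left_cancel₀ hD.ne' e2
      exact W.inj (Prod.ext (by linarith) (by linarith))
    · exact (hinj k j hk hj he.symm h).elim
  set κ : Fin m → ℝ := fun j => if j = a then -5 else u j with hκ
  have κa : κ a = -5 := by simp [hκ]
  have κu : ∀ j, j ≠ a → κ j = u j := by intro j hj; simp [hκ, hj]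
  have hbd : ∀ j, j ≠ a → -1 ≤ u j ∧ u j ≤ 1 := fun j hj => abs_le.1 (hu1 j hj)
  have hmain : ∀ j k, j ≠ a → k ≠ a → κ j < κ k → 0 ≤ chi (v a) (v j) (v k) ∧
      (chi (v a) (v j) (v k) = 0 → u j = -1 ∧ u k = 1) := by
    intro j k hj hk hlt
    rw [κu j hj, κu k hk] at hlt
    obtain ⟨p1, p2⟩ := key_aux hlt (hu1 j hj) (hu1 k hk)
    have hc := hchi j k
    have hc2 : f k * g j - f j * g k =
        (N j * N k) * (u k * (1 - |u j|) - u j * (1 - |u k|)) := by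
      rw [hfu j hj, hgu j hj, hfu k hk, hgu k hk]; ring
    rw [hc2] at hc
    have hNN := mul_pos (hNpos j hj) (hNpos k hk)
    constructor
    · have : 0 ≤ (α ^ 2 + β ^ 2) * chi (v a) (v j) (v k) := by
        rw [hc]; exact mul_nonneg hNN.le p1
      exact nonneg_of_mul_nonneg_right this hD
    · intro h0
      rw [h0, mul_zero] at hc
      exact p2 ((mul_eq_zero.1 hc.symm).resolve_left hNN.ne')
  have kne : ∀ j k, j ≠ a → κ j < κ k → k ≠ a := by
    rintro j k hj hlt rfl
    rw [κa, κu j hj] at hlt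
    linarith [(hbd j hj).1]
  refine ⟨a, κ, ?_, ?_, ?_, ?_⟩
  · intro j k hjk
    by_cases hj : j = a <;> by_cases hk : k = a
    · rw [hj, hk]
    · rw [hj, κa, κu k hk] at hjk; linarith [(hbd k hk).1]
    · rw [hk, κa, κu j hj] at hjk; linarith [(hbd j hj).1]
    · rw [κu j hj, κu k hk] at hjk
      exact hinj2 j k hj hk hjk
  · intro j hj
    rw [κa, κu j hj]; linarith [(hbd j hj).1]
  · intro j k hj hlt
    exact (hmain j k hj (kne j k hj hlt) hlt).1
  · intro j k hj hlt h0 l hl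
    have hk := kne j k hj hlt
    obtain ⟨e1, e2⟩ := (hmain j k hj hk hlt).2 h0
    rw [κu j hj, κu k hk, κu l hl, e1, e2]
    exact hbd l hl

theorem WC.exists_good {v : Fin m → ℝ × ℝ} (W : WC v) (i0 : Fin m) :
    ∃ π : Equiv.Perm (Fin m), Good (v ∘ π) := by
  obtain ⟨a, κ, hinj, hmin, O3, O4⟩ := W.keys i0
  have nea : ∀ {i j}, κ i < κ j → j ≠ a := by
    rintro i j h rfl
    by_cases hi : i = j
    · rw [hi] at h; exact lt_irrefl _ h
    · exact lt_irrefl _ (h.trans (hmin i hi))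
  have ne_of : ∀ {i j}, κ i < κ j → i ≠ j := by
    rintro i j h rfl; exact lt_irrefl _ h
  -- main claim
  have main : ∀ i j k, i ≠ a → κ i < κ j → κ j < κ k → 0 ≤ chi (v i) (v j) (v k) ∧
      (chi (v i) (v j) (v k) = 0 → v j ∈ openSegment ℝ (v i) (v k)) := by
    intro i j k hi hij hjk
    have hj := nea hij
    have hk := nea hjk
    have hx : 0 < chi (v a) (v i) (v j) := lt_of_le_of_ne (O3 i j hi hij) fun h0 =>
      absurd (O4 i j hi hij h0.symm k hk).2 (not_le.2 hjk)
    have hy : 0 < chi (v a) (v j) (v k) := lt_of_le_of_ne (O3 j k hj hjk) fun h0 =>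
      absurd (O4 j k hj hjk h0.symm i hi).1 (not_le.2 hij)
    have hsum := chi_sum (v a) (v i) (v j) (v k)
    have hrel := chi_rel (v a) (v i) (v j) (v k)
    have hdiv : ∀ z : ℝ, z ≠ 0 → z • v j = chi (v a) (v j) (v k) • v i +
        chi (v a) (v i) (v j) • v k + (-chi (v i) (v j) (v k)) • v a →
        v j = (chi (v a) (v j) (v k) / z) • v i + (chi (v a) (v i) (v j) / z) • v k +
        (-chi (v i) (v j) (v k) / z) • v a := by
      intro z hz h
      rw [div_eq_inv_mul, div_eq_inv_mul, div_eq_inv_mul, mul_smul, mul_smul, mul_smul,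
        ← smul_add, ← smul_add, ← h, smul_smul, inv_mul_cancel₀ hz, one_smul]
    have hrel' : chi (v a) (v i) (v k) • v j = chi (v a) (v j) (v k) • v i +
        chi (v a) (v i) (v j) • v k + (-chi (v i) (v j) (v k)) • v a := by
      rw [← hrel]; module
    constructor
    · by_contra hneg
      push Not at hneg
      have hz : 0 < chi (v a) (v i) (v k) := by linarith
      have := W.F1 (div_pos hy hz) (div_pos hx hz) (div_pos (neg_pos.2 hneg) hz)
        (by rw [← add_div, ← add_div, div_eq_one_iff_eq hz.ne']; linarith) (hdiv _ hz.ne' hrel')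
      rw [← chi_rot, ← chi_rot] at this
      rw [chi_rot, chi_rot, ← chi_rot (v i), ← chi_rot (v k)] at this
      linarith
    · intro h0
      have hz : 0 < chi (v a) (v i) (v k) := by linarith
      refine ⟨_, _, div_pos hy hz, div_pos hx hz, ?_, ?_⟩
      · rw [← add_div, div_eq_one_iff_eq hz.ne']; linarith
      · have := hdiv _ hz.ne' hrel'
        rw [h0, neg_zero, zero_div, zero_smul, add_zero] at this
        exact this.symm
  have g1 : ∀ i j k, κ i < κ j → κ j < κ k → 0 ≤ chi (v i) (v j) (v k) := by
    intro i j k hij hjk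
    by_cases hi : i = a
    · subst hi
      exact O3 j k (nea hij) hjk
    · exact (main i j k hi hij hjk).1
  have g2 : ∀ i j k l, κ i < κ j → κ j < κ k → κ k < κ l → 0 < chi (v i) (v k) (v l) := by
    intro i j k l hij hjk hkl
    refine lt_of_le_of_ne (g1 i k l (hij.trans hjk) hkl) fun h0 => ?_
    by_cases hi : i = a
    · subst hi
      exact absurd (O4 k l (nea hjk) hkl h0.symm j (nea hij)).1 (not_le.2 hjk)
    · have hil : i ≠ l := ne_of (hij.trans (hjk.trans hkl))
      have hk := (main i k l hi (hij.trans hjk) hkl).2 h0.symm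
      have h1 := g1 j k l hjk hkl
      have h2 := g1 i j l hij (hjk.trans hkl)
      obtain ⟨s, t, hs, ht, hst, he⟩ := id hk
      rw [← he, chi_combo _ _ _ _ _ _ hst, chi_right, chi_swap'] at h1
      have h3 : chi (v i) (v j) (v l) = 0 := by nlinarith
      have hj := (main i j l hi hij (hjk.trans hkl)).2 h3
      exact ne_of hjk (W.F2' hil hj hk)
  have g3 : ∀ i j k l, κ i < κ j → κ j < κ k → κ k < κ l →
      ((∃ e, κ e < κ i) ∨ ∃ e, κ l < κ e) → 0 < chi (v i) (v j) (v l) := by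
    intro i j k l hij hjk hkl hout
    refine lt_of_le_of_ne (g1 i j l hij (hjk.trans hkl)) fun h0 => ?_
    by_cases hi : i = a
    · subst hi
      rcases hout with ⟨e, he⟩ | ⟨e, he⟩
      · exact nea he rfl
      · exact absurd (O4 j l (nea hij) (hjk.trans hkl) h0.symm e (nea he)).2 (not_le.2 he)
    · have hj := (main i j l hi hij (hjk.trans hkl)).2 h0.symm
      have h1 := g1 i j k hij hjk
      have h2 := g2 i j k l hij hjk hkl
      obtain ⟨s, t, hs, ht, hst, he⟩ := hj
      rw [← he, chi_combo _ _ _ _ _ _ hst, chi_left, chi_swap] at h1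
      nlinarith
  have hmono : ∀ {x y : Fin m}, x < y → κ (Tuple.sort κ x) < κ (Tuple.sort κ y) := by
    intro x y hxy
    refine lt_of_le_of_ne (Tuple.monotone_sort κ hxy.le) fun h => ?_
    exact hxy.ne ((Tuple.sort κ).injective (hinj h))
  refine ⟨Tuple.sort κ, W.inj.comp (Tuple.sort κ).injective, ?_, ?_, ?_, ?_⟩
  · intro x y z h1 h2
    exact g1 _ _ _ (hmono h1) (hmono h2)
  · intro x y z w h1 h2 h3
    exact g2 _ _ _ _ (hmono h1) (hmono h2) (hmono h3)
  · intro x y z w h1 h2 h3 ho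
    refine g3 _ _ _ _ (hmono h1) (hmono h2) (hmono h3) ?_
    rcases ho with ⟨e, he⟩ | ⟨e, he⟩
    · exact Or.inl ⟨_, hmono he⟩
    · exact Or.inr ⟨_, hmono he⟩
  · intro x y z d e h1 h2 h3 h4
    exact W.g4 _ _ _ _ _ h1 (fun h => h2 ((Tuple.sort κ).injective h)) h3
      (fun h => h4 ((Tuple.sort κ).injective h))

/-- Points in convex position are weakly convex. -/
lemma WC.of_extreme {n : ℕ} {q : Fin (n + 3) → ℝ × ℝ} (hinj : Function.Injective q)
    (hq : ∀ i, q i ∈ Set.extremePoints ℝ (convexHull ℝ (Set.range q))) : WC q := by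
  have hno : ∀ i j k, j ≠ k → q i ∉ openSegment ℝ (q j) (q k) := by
    intro i j k hjk h
    have h1 := (hq i).2 (WC.mem j) (WC.mem k) h
    have h2 := (hq i).2 (WC.mem k) (WC.mem j) (by rwa [openSegment_symm])
    exact hjk (hinj (h1.trans h2.symm))
  have n01 : (0 : Fin (n + 3)) ≠ 1 := by simp [Fin.ext_iff]
  have n02 : (0 : Fin (n + 3)) ≠ 2 := by
    have h2 : 2 % (n + 3) = 2 := Nat.mod_eq_of_lt (by omega)
    simp [Fin.ext_iff, h2]
  have n12 : (1 : Fin (n + 3)) ≠ 2 := by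
    have h2 : 2 % (n + 3) = 2 := Nat.mod_eq_of_lt (by omega)
    simp [Fin.ext_iff, h2]
  refine ⟨hinj, ?_, fun i => Or.inl (hq i), ?_⟩
  · have hchi : chi (q 0) (q 1) (q 2) ≠ 0 := by
      intro h0
      have hcol : Collinear ℝ {q 0, q 1, q 2} := by
        have hni : ¬ NI q {0, 1, 2} := by
          rw [NI_triple n01 n02 n12]; simpa using h0
        rw [collinear_iff_of_mem (p₀ := q 0) (by simp)]
        have hne : q 1 ≠ q 0 := fun h => n01 (hinj h).symm
        refine ⟨q 1 - q 0, ?_⟩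
        have hsq : 0 < ((q 1).1 - (q 0).1) ^ 2 + ((q 1).2 - (q 0).2) ^ 2 := by
          by_contra hcon
          have e1 : (q 1).1 - (q 0).1 = 0 := by nlinarith [sq_nonneg ((q 1).1 - (q 0).1), sq_nonneg ((q 1).2 - (q 0).2)]
          have e2 : (q 1).2 - (q 0).2 = 0 := by nlinarith [sq_nonneg ((q 1).1 - (q 0).1), sq_nonneg ((q 1).2 - (q 0).2)]
          exact hne (Prod.ext (by linarith) (by linarith))
        intro p hp
        simp only [Set.mem_insert_iff, Set.mem_singleton_iff] at hp
        rcases hp with rfl | rfl | rfl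
        · exact ⟨0, by simp⟩
        · exact ⟨1, by simp⟩
        · refine ⟨(((q 2).1 - (q 0).1) * ((q 1).1 - (q 0).1) +
            ((q 2).2 - (q 0).2) * ((q 1).2 - (q 0).2)) /
            (((q 1).1 - (q 0).1) ^ 2 + ((q 1).2 - (q 0).2) ^ 2), ?_⟩
          unfold chi at h0
          apply Prod.ext
          · simp only [vadd_eq_add, Prod.fst_add, Prod.smul_fst, smul_eq_mul, Prod.fst_sub]
            rw [← sub_eq_iff_eq_add, div_mul_eq_mul_div, eq_div_iff hsq.ne']
            linear_combination (-((q 1).2 - (q 0).2)) * h0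
          · simp only [vadd_eq_add, Prod.snd_add, Prod.smul_snd, smul_eq_mul, Prod.snd_sub]
            rw [← sub_eq_iff_eq_add, div_mul_eq_mul_div, eq_div_iff hsq.ne']
            linear_combination ((q 1).1 - (q 0).1) * h0
      have hsb : ∀ i j k, i ≠ j → k ≠ j → i ≠ k → ¬ Wbtw ℝ (q i) (q j) (q k) := by
        intro i j k hij hkj hik hw
        rw [← mem_segment_iff_wbtw] at hw
        rcases mem_ends hw (hno j i k hik) with h | h
        · exact hij (hinj h).symm
        · exact hkj (hinj h).symm
      rcases hcol.wbtw_or_wbtw_or_wbtw with h | h | h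
      · exact hsb _ _ _ n01 n12.symm n02 h
      · exact hsb _ _ _ n12 n02 n01.symm h
      · exact hsb _ _ _ n02.symm n01.symm n12.symm h
    have hN := (NI_triple (v := q) n01 n02 n12).2 hchi
    refine (hN.interior_nonempty (Finset.card_eq_three.2 ⟨0, 1, 2, n01, n02, n12, rfl⟩)).mono ?_
    exact interior_mono (convexHull_mono (Set.image_subset_range _ _))
  · rintro x y hxy hS z ⟨⟨i, rfl⟩, hz⟩
    exfalso
    have hx := hS.1 (left_mem_segment ℝ x y)
    have hy := hS.1 (right_mem_segment ℝ x y)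
    have h1 := (hq i).2 hx hy hz
    have h2 := (hq i).2 hy hx (by rwa [openSegment_symm])
    exact hxy (h1.trans h2.symm)

theorem main_equiv (n : ℕ)
    (p : Fin (n + 3) → ℝ × ℝ) (hp : WC p) (q : Fin (n + 3) → ℝ × ℝ) (hq : WC q) :
    Nonempty
      ({T : Finset (Finset (Fin (n + 3))) // IsTriangulation p T} ≃
       {T : Finset (Finset (Fin (n + 3))) // IsTriangulation q T}) := by
  obtain ⟨π, G⟩ := hp.exists_good 0
  obtain ⟨ρ, G'⟩ := hq.exists_good 0
  obtain ⟨e1⟩ := reindex_equiv p π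
  obtain ⟨e2⟩ := reindex_equiv q ρ
  obtain ⟨e⟩ := equiv_of_good G G'
    (by rw [π.surjective.range_comp]; exact hp.int)
    (by rw [ρ.surjective.range_comp]; exact hq.int)
  exact ⟨e1.symm.trans (e.trans e2)⟩

end

/-- Let `P` be a planar configuration of `n+3` distinct points with
two-dimensional convex hull such that every point is either an extreme point
of the hull or lies in the relative interior (open segment) of an edge of the
hull, with at most one such interior point per edge.  Let `Q` be a
configuration of `n+3` distinct points in convex position.  Then the
triangulations of `P` are in bijection with the triangulations of `Q`.
Here an edge of the hull is an extreme (face) segment `[x, y]`, `x ≠ y`. -/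
theorem triangulations_equiv_of_weakly_convex (n : ℕ)
    (p : Fin (n + 3) → ℝ × ℝ) (hpinj : Function.Injective p)
    (hpdim : affineSpan ℝ (Set.range p) = ⊤)
    (hpos : ∀ i : Fin (n + 3),
      p i ∈ Set.extremePoints ℝ (convexHull ℝ (Set.range p)) ∨
      ∃ x y : ℝ × ℝ, x ≠ y ∧
        IsExtreme ℝ (convexHull ℝ (Set.range p)) (segment ℝ x y) ∧
        p i ∈ openSegment ℝ x y)
    (honce : ∀ x y : ℝ × ℝ, x ≠ y →
      IsExtreme ℝ (convexHull ℝ (Set.range p)) (segment ℝ x y) →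
      (Set.range p ∩ openSegment ℝ x y).Subsingleton)
    (q : Fin (n + 3) → ℝ × ℝ) (hqinj : Function.Injective q)
    (hqpos : ∀ i : Fin (n + 3),
      q i ∈ Set.extremePoints ℝ (convexHull ℝ (Set.range q))) :
    Nonempty
      ({T : Finset (Finset (Fin (n + 3))) // IsTriangulation p T} ≃
       {T : Finset (Finset (Fin (n + 3))) // IsTriangulation q T}) := by
  refine main_equiv n p ⟨hpinj, ?_, hpos, honce⟩ q (WC.of_extreme hqinj hqpos)
  exact interior_convexHull_nonempty_iff_affineSpan_eq_top.2 hpdim
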